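/- arXiv:2005.10920 — 3 statements merged into one kernel-verified Lean document; each statement's English description precedes it below -/
import Mathlib

section
/- Let n > 1 be an integer coprime to 6. There exist infinitely many pairwise non-isomorphic number fields K with the following properties: there is a positive integer y with yⁿ ≡ 117649 (mod 388800) and y coprime to 7, 11 and 13, such that the degree-12 polynomial (x+2)(2x+1)(x−3)(3x−1)(x+4)(4x+1)(x−5)(5x−1)(2x−3)(3x−2)(4x−5)(5x−4) + yⁿ·x²(x−1)²(x+1)²(x−2)²(2x−1)² is irreducible over ℚ and K is its splitting field; K is a totally imaginary Galois extension of ℚ of degree 12 with Galois group isomorphic to the dihedral group D₆ of order 12; and rank_n Cl(K) ≥ 11. -/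
open Polynomial NumberField

/-- `M` contains a subgroup isomorphic to `(ℤ/nℤ)^s`, i.e. `rank_n M ≥ s`. -/
def HasZModRankGE (M : Type*) [CommGroup M] (n s : ℕ) : Prop :=
  ∃ φ : (Multiplicative (Fin s → ZMod n)) →* M, Function.Injective φ

/-- A number field (here a subfield of `ℂ`) is totally imaginary if none of its complex
embeddings takes only real values. -/
def TotallyImaginary (K : Type*) [Field K] : Prop :=
  ∀ φ : K →+* ℂ, ∃ x : K, (φ x).im ≠ 0



open Polynomial NumberField

open Classical in
/-- indicator of primes in a residue class -/
noncomputable def prInd (m : ℕ) (a : ZMod m) (k : ℕ) : ℝ :=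
  if k.Prime ∧ (k : ZMod m) = a then 1 else 0

lemma prInd_nonneg (m : ℕ) (a : ZMod m) (k : ℕ) : 0 ≤ prInd m a k := by
  unfold prInd; split_ifs <;> norm_num

lemma prInd_le_one (m : ℕ) (a : ZMod m) (k : ℕ) : prInd m a k ≤ 1 := by
  unfold prInd; split_ifs <;> norm_num

lemma prInd_summable (m : ℕ) (a : ZMod m) {x : ℝ} (hx : 1 < x) :
    Summable fun k : ℕ => prInd m a k / (k : ℝ) ^ x := by
  refine Summable.of_nonneg_of_le (fun k => div_nonneg (prInd_nonneg m a k) (by positivity))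
    (fun k => ?_) (Real.summable_one_div_nat_rpow.mpr hx)
  exact div_le_div_of_nonneg_right (prInd_le_one m a k) (by positivity)

lemma term_real (f : ℕ → ℝ) (hf : f 0 = 0) (x : ℝ) (k : ℕ) :
    LSeries.term (fun k => (f k : ℂ)) (x : ℂ) k = ((f k / (k : ℝ) ^ x : ℝ) : ℂ) := by
  rw [LSeries.term_def]
  split_ifs with h
  · simp [h, hf]
  · rw [Complex.ofReal_div, Complex.ofReal_cpow (Nat.cast_nonneg _)]
    simp

lemma LSeries_real (f : ℕ → ℝ) (hf : f 0 = 0) (x : ℝ) :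
    LSeries (fun k => (f k : ℂ)) (x : ℂ) = ((∑' k : ℕ, f k / (k : ℝ) ^ x : ℝ) : ℂ) := by
  rw [LSeries, Complex.ofReal_tsum]
  exact tsum_congr fun k => term_real f hf x k

lemma prInd_zero (m : ℕ) (a : ZMod m) : prInd m a 0 = 0 := by
  simp [prInd, Nat.not_prime_zero]

lemma prInd_hasDerivAt (m : ℕ) (a : ZMod m) {x : ℝ} (hx : 1 < x) :
    HasDerivAt (fun x : ℝ => ∑' k : ℕ, prInd m a k / (k : ℝ) ^ x)
      (-∑' k : ℕ, (Real.log k * prInd m a k) / (k : ℝ) ^ x) x := by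
  have habs : LSeries.abscissaOfAbsConv (fun k => (prInd m a k : ℂ)) < ((x : ℂ)).re := by
    refine lt_of_le_of_lt (LSeries.abscissaOfAbsConv_le_of_le_const ⟨1, fun k _ => ?_⟩) ?_
    · rw [Complex.norm_real, Real.norm_of_nonneg (prInd_nonneg m a k)]
      exact prInd_le_one m a k
    · rw [Complex.ofReal_re]; exact_mod_cast hx
  have h := (LSeries_hasDerivAt habs).real_of_complex
  have e1 : (fun x : ℝ => (LSeries (fun k => (prInd m a k : ℂ)) (x : ℂ)).re) =
      fun x : ℝ => ∑' k : ℕ, prInd m a k / (k : ℝ) ^ x := by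
    funext x
    rw [LSeries_real _ (prInd_zero m a), Complex.ofReal_re]
  have e2 : LSeries.logMul (fun k => (prInd m a k : ℂ)) =
      fun k : ℕ => ((Real.log k * prInd m a k : ℝ) : ℂ) := by
    funext k
    simp [LSeries.logMul, Complex.natCast_log]
  rw [e1, e2, LSeries_real _ (by simp), Complex.neg_re, Complex.ofReal_re] at h
  exact h

lemma log_prInd_lower (m : ℕ) [NeZero m] (a : ZMod m) (ha : IsUnit a) :
    ∃ C : ℝ, ∀ x : ℝ, x ∈ Set.Ioc (1 : ℝ) 2 →
      (m.totient : ℝ)⁻¹ / (x - 1) - C ≤ ∑' k : ℕ, (Real.log k * prInd m a k) / (k : ℝ) ^ x := by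
  obtain ⟨C, hC⟩ := ArithmeticFunction.vonMangoldt.LSeries_residueClass_lower_bound ha
  have hs := ArithmeticFunction.vonMangoldt.summable_residueClass_non_primes_div a
  set R := ArithmeticFunction.vonMangoldt.residueClass a with hR
  refine ⟨C + ∑' k : ℕ, (if k.Prime then 0 else R k) / k, fun x hx => ?_⟩
  have h1 := hC hx
  have hR0 : ∀ k, 0 ≤ R k := ArithmeticFunction.vonMangoldt.residueClass_nonneg a
  have hn0 : ∀ k : ℕ, 0 ≤ (if k.Prime then 0 else R k) := fun k => by
    split_ifs; exacts [le_rfl, hR0 k]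
  have hle : ∀ k : ℕ, (if k.Prime then 0 else R k) / (k : ℝ) ^ x ≤
      (if k.Prime then 0 else R k) / k := by
    intro k
    rcases Nat.eq_zero_or_pos k with rfl | hk
    · simp [hR]
    · refine div_le_div_of_nonneg_left (hn0 k) (by positivity) ?_
      have : (1 : ℝ) ≤ k := by exact_mod_cast hk
      simpa using Real.rpow_le_rpow_of_exponent_le this hx.1.le
  have hs2 : Summable fun k : ℕ => (if k.Prime then 0 else R k) / (k : ℝ) ^ x :=
    Summable.of_nonneg_of_le (fun k => div_nonneg (hn0 k) (by positivity)) hle hs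
  have hsum : Summable fun k : ℕ => (Real.log k * prInd m a k) / (k : ℝ) ^ x := by
    have habs : LSeries.abscissaOfAbsConv (fun k => (prInd m a k : ℂ)) < ((x : ℂ)).re := by
      refine lt_of_le_of_lt (LSeries.abscissaOfAbsConv_le_of_le_const ⟨1, fun k _ => ?_⟩) ?_
      · rw [Complex.norm_real, Real.norm_of_nonneg (prInd_nonneg m a k)]
        exact prInd_le_one m a k
      · rw [Complex.ofReal_re]; exact_mod_cast hx.1
    have h := LSeriesSummable_logMul_of_lt_re habs
    have e2 : LSeries.logMul (fun k => (prInd m a k : ℂ)) =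
        fun k : ℕ => ((Real.log k * prInd m a k : ℝ) : ℂ) := by
      funext k
      simp [LSeries.logMul, Complex.natCast_log]
    rw [LSeriesSummable, e2] at h
    have h3 : Summable fun k : ℕ => (((Real.log k * prInd m a k) / (k : ℝ) ^ x : ℝ) : ℂ) :=
      h.congr fun k => (term_real (fun k : ℕ => Real.log k * prInd m a k) (by simp) x k)
    exact Complex.summable_ofReal.mp h3
  have hdec : ∀ k : ℕ, R k / (k : ℝ) ^ x = (Real.log k * prInd m a k) / (k : ℝ) ^ x +
      (if k.Prime then 0 else R k) / (k : ℝ) ^ x := by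
    intro k
    rw [← add_div]
    congr 1
    by_cases hk : k.Prime
    · by_cases hk2 : (k : ZMod m) = a
      · simp [hk, hk2, prInd, hR, ArithmeticFunction.vonMangoldt.residueClass,
          ArithmeticFunction.vonMangoldt_apply_prime hk]
      · simp [hk, hk2, prInd, hR, ArithmeticFunction.vonMangoldt.residueClass]
    · simp [hk, prInd]
  have h2 : ∑' k : ℕ, R k / (k : ℝ) ^ x = ∑' k : ℕ, (Real.log k * prInd m a k) / (k : ℝ) ^ x +
      ∑' k : ℕ, (if k.Prime then 0 else R k) / (k : ℝ) ^ x := by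
    rw [← hsum.tsum_add hs2]
    exact tsum_congr hdec
  have h3 := hs2.tsum_le_tsum hle hs
  linarith

lemma prInd_lower (m : ℕ) [NeZero m] (a : ZMod m) (ha : IsUnit a) :
    ∃ C : ℝ, ∀ x : ℝ, x ∈ Set.Ioc (1 : ℝ) 2 →
      (m.totient : ℝ)⁻¹ * (-Real.log (x - 1)) - C ≤ ∑' k : ℕ, prInd m a k / (k : ℝ) ^ x := by
  obtain ⟨C, hC⟩ := log_prInd_lower m a ha
  set t : ℝ := (m.totient : ℝ)⁻¹ with ht
  set B : ℝ → ℝ := fun x : ℝ => ∑' k : ℕ, prInd m a k / (k : ℝ) ^ x with hB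
  set G : ℝ → ℝ := fun x => B x + t * Real.log (x - 1) - C * x with hG
  have hd : ∀ x : ℝ, 1 < x → HasDerivAt G
      (-(∑' k : ℕ, (Real.log k * prInd m a k) / (k : ℝ) ^ x) + t * (1 / (x - 1)) - C * 1) x := by
    intro x hx
    have h1 := prInd_hasDerivAt m a hx
    have h2 : HasDerivAt (fun x : ℝ => Real.log (x - 1)) (1 / (x - 1)) x :=
      ((hasDerivAt_id x).sub_const 1).log (by simp; linarith)
    exact (h1.add (h2.const_mul t)).sub ((hasDerivAt_id x).const_mul C)
  have hanti : AntitoneOn G (Set.Ioc 1 2) := by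
    refine antitoneOn_of_deriv_nonpos (convex_Ioc 1 2) ?_ ?_ ?_
    · exact fun x hx => (hd x hx.1).continuousAt.continuousWithinAt
    · intro x hx
      rw [interior_Ioc] at hx
      exact (hd x hx.1).differentiableAt.differentiableWithinAt
    · intro x hx
      rw [interior_Ioc] at hx
      rw [(hd x hx.1).deriv]
      have := hC x ⟨hx.1, hx.2.le⟩
      have e : t * (1 / (x - 1)) = t / (x - 1) := by ring
      rw [e]; linarith
  refine ⟨|G 2| + |C| * 2, fun x hx => ?_⟩
  have h := hanti hx (⟨by norm_num, le_rfl⟩ : (2 : ℝ) ∈ Set.Ioc (1 : ℝ) 2) hx.2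
  have h4 := neg_abs_le (G 2)
  have h5 : -(|C| * 2) ≤ C * x := by
    have := neg_abs_le C
    have h6 := abs_nonneg C
    nlinarith [hx.1, hx.2]
  simp only [hG] at h h4 ⊢
  change _ ≤ B x
  linarith


open Polynomial NumberField

section zeta
variable (E : Type*) [Field E] [NumberField E]

/-- number of ideals of given norm, with value `0` at `0` -/
noncomputable def idCount (k : ℕ) : ℝ :=
  if k = 0 then 0 else (Nat.card {I : Ideal (𝓞 E) // Ideal.absNorm I = k} : ℝ)

lemma dedekindZeta_real (s : ℝ) :
    dedekindZeta E (s : ℂ) = ((∑' k : ℕ, idCount E k / (k : ℝ) ^ s : ℝ) : ℂ) := by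
  rw [dedekindZeta, ← LSeries_real (idCount E) (by simp [idCount])]
  refine LSeries_congr (fun {k} hk => ?_) _
  simp [idCount, hk]

lemma zeta_bound : ∃ C : ℝ, 0 < C ∧ ∃ δ : ℝ, 0 < δ ∧ ∀ s : ℝ, 1 < s → s < 1 + δ →
    (Summable fun k : ℕ => idCount E k / (k : ℝ) ^ s) ∧
    ∑' k : ℕ, idCount E k / (k : ℝ) ^ s ≤ C / (s - 1) := by
  have h := tendsto_sub_one_mul_dedekindZeta_nhdsGT E
  have hre : Filter.Tendsto (fun s : ℝ => (s - 1) * ∑' k : ℕ, idCount E k / (k : ℝ) ^ s)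
      (nhdsWithin 1 (Set.Ioi 1)) (nhds (dedekindZeta_residue E)) := by
    have h2 := (Complex.continuous_re.tendsto _).comp h
    simp only [Complex.ofReal_re] at h2
    refine h2.congr fun s => ?_
    simp only [Function.comp_apply]
    rw [dedekindZeta_real, ← Complex.ofReal_one, ← Complex.ofReal_sub, ← Complex.ofReal_mul,
      Complex.ofReal_re]
  have hpos := dedekindZeta_residue_pos E
  have h1 := hre.eventually (eventually_lt_nhds (lt_add_one (dedekindZeta_residue E)))
  have h2 := hre.eventually (eventually_gt_nhds hpos)
  obtain ⟨u, hu, hu2⟩ := (mem_nhdsGT_iff_exists_Ioo_subset).mp (h1.and h2)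
  refine ⟨dedekindZeta_residue E + 1, by linarith, u - 1, by simpa using hu, fun s hs1 hs2 => ?_⟩
  obtain ⟨h3, h4⟩ := hu2 ⟨hs1, by linarith⟩
  constructor
  · by_contra hns
    rw [tsum_eq_zero_of_not_summable hns] at h4
    simp at h4
  · rw [le_div_iff₀ (by linarith)]
    linarith

lemma prod_inj (T A B : Finset (Ideal (𝓞 E))) (hT : ∀ I ∈ T, Prime I) (hA : A ⊆ T) (hB : B ⊆ T)
    (h : ∏ I ∈ A, I = ∏ I ∈ B, I) : A = B := by
  have key : ∀ A B : Finset (Ideal (𝓞 E)), A ⊆ T → B ⊆ T → ∏ I ∈ A, I = ∏ I ∈ B, I → A ⊆ B := by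
    intro A B hA hB h I hI
    have h1 : I ∣ ∏ J ∈ B, J := h ▸ Finset.dvd_prod_of_mem _ hI
    obtain ⟨J, hJ, hIJ⟩ := (hT I (hA hI)).exists_mem_finset_dvd h1
    have := (hT I (hA hI)).associated_of_dvd (hT J (hB hJ)) hIJ
    rw [associated_iff_eq] at this
    exact this ▸ hJ
  exact Finset.Subset.antisymm (key A B hA hB h) (key B A hB hA h.symm)

lemma prod_le_zeta {s : ℝ} (hs : Summable fun k : ℕ => idCount E k / (k : ℝ) ^ s)
    (T : Finset (Ideal (𝓞 E))) (hT : ∀ I ∈ T, Prime I) :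
    ∏ I ∈ T, (1 + ((Ideal.absNorm I : ℝ) ^ s)⁻¹) ≤ ∑' k : ℕ, idCount E k / (k : ℝ) ^ s := by
  classical
  rw [Finset.prod_one_add]
  have h1 : ∀ A ∈ T.powerset, ∏ I ∈ A, ((Ideal.absNorm I : ℝ) ^ s)⁻¹ =
      ((Ideal.absNorm (∏ I ∈ A, I) : ℝ) ^ s)⁻¹ := by
    intro A _
    rw [Finset.prod_inv_distrib, map_prod, Nat.cast_prod,
      Real.finsetProd_rpow _ _ (fun i _ => Nat.cast_nonneg _)]
  rw [Finset.sum_congr rfl h1]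
  set N : Finset (Ideal (𝓞 E)) → ℕ := fun A => Ideal.absNorm (∏ I ∈ A, I) with hN
  have h2 : ∑ A ∈ T.powerset, ((N A : ℝ) ^ s)⁻¹ =
      ∑ k ∈ T.powerset.image N, ((T.powerset.filter (fun A => N A = k)).card : ℝ) * ((k : ℝ) ^ s)⁻¹ := by
    rw [← Finset.sum_fiberwise_of_maps_to (g := N) (t := T.powerset.image N)
      (fun A hA => Finset.mem_image_of_mem _ hA)]
    refine Finset.sum_congr rfl fun k _ => ?_
    rw [Finset.sum_congr rfl (g := fun _ => ((k : ℝ) ^ s)⁻¹)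
      (fun A hA => by rw [(Finset.mem_filter.mp hA).2])]
    simp
  change ∑ A ∈ T.powerset, ((N A : ℝ) ^ s)⁻¹ ≤ _
  rw [h2]
  have hnn : ∀ k : ℕ, 0 ≤ idCount E k / (k : ℝ) ^ s := fun k => by
    unfold idCount; split_ifs <;> positivity
  refine le_trans (Finset.sum_le_sum fun k hk => ?_) (hs.sum_le_tsum (T.powerset.image N)
    (fun k _ => hnn k))
  rw [div_eq_mul_inv]
  refine mul_le_mul_of_nonneg_right ?_ (by positivity)
  have hk0 : k ≠ 0 := by
    obtain ⟨A, hA, rfl⟩ := Finset.mem_image.mp hk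
    rw [Finset.mem_powerset] at hA
    simp only [hN, map_prod]
    refine Finset.prod_ne_zero_iff.mpr fun I hI => ?_
    rw [Ne, Ideal.absNorm_eq_zero_iff]
    exact (hT I (hA hI)).ne_zero
  rw [idCount, if_neg hk0]
  norm_cast
  have hfin : Finite {I : Ideal (𝓞 E) // Ideal.absNorm I = k} :=
    Ideal.finite_setOfPred_absNorm_eq k
  rw [← Nat.card_eq_finsetCard]
  refine Nat.card_le_card_of_injective (fun A : {A // A ∈ T.powerset.filter (fun A => N A = k)} =>
    (⟨∏ I ∈ A.1, I, (Finset.mem_filter.mp A.2).2⟩ : {I : Ideal (𝓞 E) // Ideal.absNorm I = k})) ?_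
  intro A A' h
  have h' := congrArg Subtype.val h
  have hA := (Finset.mem_filter.mp A.2).1
  have hA' := (Finset.mem_filter.mp A'.2).1
  rw [Finset.mem_powerset] at hA hA'
  exact Subtype.ext (prod_inj E T _ _ hT hA hA' h')

lemma ideal_sum_bound (M B : ℕ) (κ : ℕ → ℕ) (hκ : ∀ q, κ q ≤ M)
    (hP : ∀ q : ℕ, q.Prime → B < q → ∃ T : Finset (Ideal (𝓞 E)), T.card = κ q ∧
      ∀ I ∈ T, Prime I ∧ Ideal.absNorm I = q) :
    ∃ C : ℝ, ∃ δ : ℝ, 0 < δ ∧ ∀ s : ℝ, 1 < s → s < 1 + δ →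
      ∀ T : Finset ℕ, (∀ q ∈ T, q.Prime ∧ B < q) →
        ∑ q ∈ T, (κ q : ℝ) / (q : ℝ) ^ s ≤ -Real.log (s - 1) + C := by
  classical
  obtain ⟨C, hC, δ, hδ, hz⟩ := zeta_bound E
  choose! F hF1 hF2 using hP
  refine ⟨Real.log C + ∑' k : ℕ, M * (1 / (k : ℝ) ^ 2), δ, hδ, fun s hs1 hs2 T hT => ?_⟩
  obtain ⟨hsum, hle⟩ := hz s hs1 hs2
  set TT := T.biUnion F with hTT
  have hTTp : ∀ I ∈ TT, Prime I := by
    intro I hI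
    obtain ⟨q, hq, hI⟩ := Finset.mem_biUnion.mp hI
    exact (hF2 q (hT q hq).1 (hT q hq).2 I hI).1
  have h1 := (prod_le_zeta E hsum TT hTTp).trans hle
  have hdisj : (T : Set ℕ).PairwiseDisjoint F := by
    intro q hq q' hq' hne
    rw [Function.onFun, Finset.disjoint_left]
    intro I hI hI'
    apply hne
    rw [← (hF2 q (hT q hq).1 (hT q hq).2 I hI).2, (hF2 q' (hT q' hq').1 (hT q' hq').2 I hI').2]
  rw [hTT, Finset.prod_biUnion hdisj] at h1
  have h2 : ∀ q ∈ T, ∏ I ∈ F q, (1 + ((Ideal.absNorm I : ℝ) ^ s)⁻¹) =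
      (1 + ((q : ℝ) ^ s)⁻¹) ^ κ q := by
    intro q hq
    rw [← hF1 q (hT q hq).1 (hT q hq).2, ← Finset.prod_const]
    exact Finset.prod_congr rfl fun I hI => by rw [(hF2 q (hT q hq).1 (hT q hq).2 I hI).2]
  rw [Finset.prod_congr rfl h2] at h1
  have h3 := Real.log_le_log (Finset.prod_pos fun q _ => by positivity) h1
  rw [Real.log_prod (fun q _ => by positivity), Real.log_div hC.ne' (by linarith)] at h3
  have h4 : ∀ q ∈ T, (κ q : ℝ) / (q : ℝ) ^ s ≤
      Real.log ((1 + ((q : ℝ) ^ s)⁻¹) ^ κ q) + M * (1 / (q : ℝ) ^ 2) := by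
    intro q hq
    have hq1 : (1 : ℝ) ≤ q := by exact_mod_cast (hT q hq).1.one_lt.le
    have hqs : (q : ℝ) ≤ (q : ℝ) ^ s := by
      simpa using Real.rpow_le_rpow_of_exponent_le hq1 hs1.le
    set x : ℝ := ((q : ℝ) ^ s)⁻¹ with hx
    have hx0 : 0 ≤ x := by positivity
    have hxq : x ≤ (q : ℝ)⁻¹ := inv_anti₀ (by linarith) hqs
    have hlog := Real.le_log_one_add_of_nonneg hx0
    have h5 : x - x ^ 2 ≤ 2 * x / (x + 2) := by
      rw [le_div_iff₀ (by linarith)]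
      nlinarith [sq_nonneg x, pow_nonneg hx0 3]
    have h6 : x ^ 2 ≤ 1 / (q : ℝ) ^ 2 := by
      rw [one_div, ← inv_pow]
      exact pow_le_pow_left₀ hx0 hxq 2
    have h7 : (κ q : ℝ) ≤ M := by exact_mod_cast hκ q
    have h8 : (0 : ℝ) ≤ κ q := Nat.cast_nonneg _
    rw [Real.log_pow, div_eq_mul_inv]
    have h9 : (κ q : ℝ) * x ^ 2 ≤ M * (1 / (q : ℝ) ^ 2) :=
      mul_le_mul h7 h6 (by positivity) (by positivity)
    have h10 : (κ q : ℝ) * (x - x ^ 2) ≤ κ q * Real.log (1 + x) :=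
      mul_le_mul_of_nonneg_left (h5.trans hlog) h8
    nlinarith
  have h5 : Summable fun k : ℕ => (M : ℝ) * (1 / (k : ℝ) ^ 2) :=
    (Real.summable_one_div_nat_pow.mpr one_lt_two).mul_left _
  have h6 := h5.sum_le_tsum T (fun k _ => by positivity)
  have h7 := Finset.sum_le_sum h4
  rw [Finset.sum_add_distrib] at h7
  linarith

end zeta


open Polynomial NumberField

section place

lemma padic_norm_le_one {q : ℕ} [Fact q.Prime] {x : ℚ_[q]} (hx : IsIntegral ℤ x) : ‖x‖ ≤ 1 := by
  have h1 : IsIntegral ℤ_[q] x := hx.tower_top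
  obtain ⟨z, hz⟩ := IsIntegrallyClosed.isIntegral_iff.mp h1
  rw [← hz]
  exact z.2

/-- integral elements reduce to `ℤ_q` -/
noncomputable def redHom {E : Type*} [Field E] {q : ℕ} [Fact q.Prime] (σ : E →+* ℚ_[q]) :
    𝓞 E →+* ℤ_[q] :=
  RingHom.codRestrict (σ.comp (algebraMap (𝓞 E) E)) (PadicInt.subring q) (fun x =>
    padic_norm_le_one (by
      have := (RingOfIntegers.isIntegral_coe x).map (σ.toIntAlgHom)
      simpa using this))

lemma redHom_coe {E : Type*} [Field E] {q : ℕ} [Fact q.Prime] (σ : E →+* ℚ_[q]) (x : 𝓞 E) :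
    ((redHom σ x : ℤ_[q]) : ℚ_[q]) = σ (x : E) := rfl

lemma toZMod_eq_zero_iff {q : ℕ} [Fact q.Prime] (z : ℤ_[q]) :
    PadicInt.toZMod z = 0 ↔ ‖z‖ < 1 := by
  rw [← RingHom.mem_ker, PadicInt.ker_toZMod, IsLocalRing.mem_maximalIdeal, PadicInt.mem_nonunits]

lemma hensel_simple {q : ℕ} [Fact q.Prime] (F : ℤ[X]) (a : ℤ) (h0 : ((F.eval a : ℤ) : ZMod q) = 0)
    (h1 : ((F.derivative.eval a : ℤ) : ZMod q) ≠ 0) :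
    ∃ z : ℤ_[q], aeval z F = 0 ∧ PadicInt.toZMod z = (a : ZMod q) := by
  have e : ∀ G : ℤ[X], aeval (a : ℤ_[q]) G = ((G.eval a : ℤ) : ℤ_[q]) := by
    intro G
    have := aeval_algebraMap_apply (A := ℤ) ℤ_[q] a G
    simpa using this
  have h0' : ‖aeval (a : ℤ_[q]) F‖ < 1 := by
    rw [e, ← toZMod_eq_zero_iff, map_intCast, h0]
  have h1' : ‖aeval (a : ℤ_[q]) F.derivative‖ = 1 := by
    refine le_antisymm (PadicInt.norm_le_one _) ?_
    by_contra hlt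
    push Not at hlt
    rw [e, ← toZMod_eq_zero_iff, map_intCast] at hlt
    exact h1 hlt
  obtain ⟨z, hz, hz2, -⟩ := hensels_lemma (F := F) (a := (a : ℤ_[q])) (by rw [h1']; simpa using h0')
  refine ⟨z, hz, ?_⟩
  rw [h1', ← toZMod_eq_zero_iff, map_sub, map_intCast, sub_eq_zero] at hz2
  exact hz2

lemma ker_ideal {E : Type*} [Field E] [NumberField E] {q : ℕ} [Fact q.Prime] (f : 𝓞 E →+* ZMod q) :
    Prime (RingHom.ker f) ∧ Ideal.absNorm (RingHom.ker f) = q := by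
  have h2 : Ideal.absNorm (RingHom.ker f) = q := by
    rw [Ideal.absNorm_apply, Submodule.cardQuot_apply,
      Nat.card_congr (RingHom.quotientKerEquivOfSurjective (ZMod.ringHom_surjective f)).toEquiv,
      Nat.card_zmod]
  refine ⟨?_, h2⟩
  refine Ideal.prime_of_isPrime ?_ (RingHom.ker_isPrime f)
  intro h
  rw [h] at h2
  simp at h2
  exact (Fact.out : q.Prime).ne_zero h2.symm

end place

section lemmaA

lemma roots_count {p q : ℕ} (hp : p.Prime) [Fact q.Prime] (c a : ZMod q) (ha : a ≠ 0)
    (hc : c ^ p = a) :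
    ∃ R : Finset (ZMod q), R.card = (if (q : ZMod p) = 1 then p else 1) ∧ ∀ r ∈ R, r ^ p = a := by
  classical
  have hc0 : c ≠ 0 := by
    rintro rfl
    rw [zero_pow hp.ne_zero] at hc
    exact ha hc.symm
  split_ifs with h
  · have := Fact.mk hp
    have hd : p ∣ Fintype.card (ZMod q)ˣ := by
      rw [ZMod.card_units_eq_totient, Nat.totient_prime (Fact.out : q.Prime)]
      have h1 : (1 : ℕ) ≤ q := (Fact.out : q.Prime).one_le
      rw [← ZMod.natCast_eq_zero_iff, Nat.cast_sub h1, h]; simp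
    obtain ⟨x, hx⟩ := exists_prime_orderOf_dvd_card p hd
    refine ⟨(Finset.range p).image (fun i => c * ((x ^ i : (ZMod q)ˣ) : ZMod q)), ?_, ?_⟩
    · rw [Finset.card_image_of_injOn, Finset.card_range]
      intro i hi j hj hij
      have := Units.ext (mul_left_cancel₀ hc0 hij)
      refine pow_injOn_Iio_orderOf (x := x) ?_ ?_ this <;> simp_all
    · intro r hr
      obtain ⟨i, -, rfl⟩ := Finset.mem_image.mp hr
      rw [mul_pow, hc, ← Units.val_pow_eq_pow_val, ← pow_mul, mul_comm i p, pow_mul, ← hx,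
        pow_orderOf_eq_one]
      simp
  · exact ⟨{c}, by simp, by simp [hc]⟩

lemma lemmaA {p : ℕ} (hp : p.Prime) (a : ℕ) (ha : ∀ b : ℚ, b ^ p ≠ a) (B : ℕ) :
    ∃ q : ℕ, q.Prime ∧ B < q ∧ ∀ c : ZMod q, c ^ p ≠ (a : ZMod q) := by
  classical
  by_contra hcon
  push Not at hcon
  have ha0 : a ≠ 0 := by
    rintro rfl
    exact ha 0 (by simp [hp.ne_zero])
  have := Fact.mk hp
  have hirr : Fact (Irreducible (X ^ p - C (a : ℚ))) :=
    ⟨X_pow_sub_C_irreducible_of_prime hp ha⟩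
  let E := AdjoinRoot (X ^ p - C (a : ℚ))
  set B' := B + a + p with hB'
  have hα : (AdjoinRoot.root (X ^ p - C (a : ℚ))) ^ p = (a : E) := by
    have := AdjoinRoot.eval₂_root (X ^ p - C (a : ℚ))
    rw [eval₂_sub, eval₂_X_pow, eval₂_C, sub_eq_zero] at this
    rw [this]; simp
  have hIntg : IsIntegral ℤ (AdjoinRoot.root (X ^ p - C (a : ℚ))) := by
    refine IsIntegral.of_pow hp.pos ?_
    rw [hα]
    exact isIntegral_algebraMap (R := ℤ) (x := (a : ℤ))
  let α : 𝓞 E := ⟨AdjoinRoot.root _, hIntg⟩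
  obtain ⟨C0, δ, hδ, hb⟩ := ideal_sum_bound E p B' (fun q => if (q : ZMod p) = 1 then p else 1)
    (by intro q; split_ifs; exacts [le_rfl, hp.one_le]) (by
    intro q hq hBq
    have := Fact.mk hq
    obtain ⟨c, hc⟩ := hcon q hq (by omega)
    have haq : (a : ZMod q) ≠ 0 := by
      rw [Ne, ZMod.natCast_eq_zero_iff]
      intro h; have := Nat.le_of_dvd (Nat.pos_of_ne_zero ha0) h; omega
    have hpq : (p : ZMod q) ≠ 0 := by
      rw [Ne, ZMod.natCast_eq_zero_iff]
      intro h; have := Nat.le_of_dvd hp.pos h; omega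
    obtain ⟨R, hR, hRr⟩ := roots_count hp c a haq hc
    have hom : ∀ r ∈ R, ∃ f : 𝓞 E →+* ZMod q, f α = r := by
      intro r hr
      obtain ⟨b, rfl⟩ := ZMod.intCast_surjective r
      have hb := hRr _ hr
      have hb0 : (b : ZMod q) ≠ 0 := by
        intro h
        rw [h, zero_pow hp.ne_zero] at hb
        exact haq hb.symm
      obtain ⟨z, hz, hz2⟩ := hensel_simple (q := q) (X ^ p - C (a : ℤ)) b
        (by simp [hb]) (by
          simp only [derivative_sub, derivative_X_pow, derivative_C]
          simp [hpq, hb0])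
      let σ : E →+* ℚ_[q] := AdjoinRoot.lift (algebraMap ℚ ℚ_[q]) (z : ℚ_[q]) (by
        simp only [map_sub, map_pow, aeval_X, aeval_C] at hz
        have hz' := congrArg (fun t : ℤ_[q] => (t : ℚ_[q])) hz
        rw [eval₂_sub, eval₂_X_pow, eval₂_C]
        simpa using hz')
      refine ⟨(PadicInt.toZMod).comp (redHom σ), ?_⟩
      rw [← hz2, RingHom.comp_apply]
      congr 1
      apply Subtype.ext
      change σ (AdjoinRoot.root _) = z
      exact AdjoinRoot.lift_root _
    have hc1 : c ^ p = a := hc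
    have hne : R.Nonempty := by
      rw [← Finset.card_pos, hR]; split_ifs; exacts [hp.pos, one_pos]
    obtain ⟨r0, hr0⟩ := hne
    have hne : Nonempty (𝓞 E →+* ZMod q) := ⟨(hom r0 hr0).choose⟩
    choose! f hf using hom
    refine ⟨R.image (fun r => RingHom.ker (f r)), ?_, ?_⟩
    · rw [Finset.card_image_of_injOn, hR]
      intro r hr s hs hrs
      obtain ⟨b, hb⟩ := ZMod.intCast_surjective r
      have h1 : α - (b : 𝓞 E) ∈ RingHom.ker (f r) := by
        rw [RingHom.mem_ker, map_sub, hf r hr, map_intCast, hb, sub_self]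
      dsimp only at hrs
      rw [hrs, RingHom.mem_ker, map_sub, hf s hs, map_intCast, hb, sub_eq_zero] at h1
      exact h1.symm
    · intro I hI
      obtain ⟨r, -, rfl⟩ := Finset.mem_image.mp hI
      exact ker_ideal (f r))
  obtain ⟨C1, h1⟩ := prInd_lower 1 1 isUnit_one
  obtain ⟨C2, h2⟩ := prInd_lower p 1 isUnit_one
  have hp1 : (1 : ℝ) < p := by exact_mod_cast hp.one_lt
  set g : ℕ → ℝ := fun k => prInd 1 1 k + (p - 1) * prInd p 1 k with hg
  have hg0 : ∀ k, 0 ≤ g k := fun k =>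
    add_nonneg (prInd_nonneg _ _ _) (mul_nonneg (by linarith) (prInd_nonneg _ _ _))
  have hgp : ∀ k, g k ≤ p := fun k => by
    have := prInd_le_one 1 1 k
    have h3 := prInd_le_one p 1 k
    simp only [hg]; nlinarith
  have hgk : ∀ k : ℕ, k.Prime → g k = ((if (k : ZMod p) = 1 then p else 1 : ℕ) : ℝ) := by
    intro k hk
    simp only [hg, prInd]
    have : (k : ZMod 1) = 1 := Subsingleton.elim _ _
    by_cases h : (k : ZMod p) = 1 <;> simp [hk, this, h]
  have hgn : ∀ k : ℕ, ¬ k.Prime → g k = 0 := by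
    intro k hk
    simp [hg, prInd, hk]
  have key : ∀ s : ℝ, 1 < s → s < 1 + δ →
      ∑' k : ℕ, g k / (k : ℝ) ^ s ≤ (B' + 1) * p + (-Real.log (s - 1) + C0) := by
    intro s hs hs2
    refine Real.tsum_le_of_sum_range_le (fun k => div_nonneg (hg0 k) (by positivity)) fun N => ?_
    have hsplit : ∑ k ∈ Finset.range N, g k / (k : ℝ) ^ s ≤
        ∑ k ∈ Finset.range (B' + 1), g k / (k : ℝ) ^ s +
        ∑ k ∈ (Finset.range N).filter (fun k => k.Prime ∧ B' < k), g k / (k : ℝ) ^ s := by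
      rw [← Finset.sum_filter_add_sum_filter_not (Finset.range N) (fun k => k.Prime ∧ B' < k), add_comm]
      refine add_le_add ?_ le_rfl
      rw [← Finset.sum_filter_ne_zero]
      refine Finset.sum_le_sum_of_subset_of_nonneg (fun k hk => ?_)
        (fun k _ _ => div_nonneg (hg0 k) (by positivity))
      rw [Finset.mem_filter] at hk
      obtain ⟨hk, hne⟩ := hk
      simp only [Finset.mem_filter, not_and, not_lt] at hk
      have : k.Prime := by
        by_contra h; exact hne (by rw [hgn k h, zero_div])
      simp only [Finset.mem_range]; have := hk.2 this; omega
    refine hsplit.trans (add_le_add ?_ ?_)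
    · refine (Finset.sum_le_card_nsmul _ _ (p : ℝ) fun k _ => ?_).trans (by simp)
      rcases Nat.eq_zero_or_pos k with rfl | hk
      · rw [hgn 0 Nat.not_prime_zero]; simp
      · refine (div_le_self (hg0 k) ?_).trans (hgp k)
        exact Real.one_le_rpow (by exact_mod_cast hk) (by linarith)
    · refine le_trans (le_of_eq ?_) (hb s hs hs2 ((Finset.range N).filter (fun k => k.Prime ∧ B' < k))
        (fun q hq => (Finset.mem_filter.mp hq).2))
      refine Finset.sum_congr rfl fun k hk => ?_
      rw [hgk k (Finset.mem_filter.mp hk).2.1]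
  have key2 : ∀ s : ℝ, 1 < s → s ≤ 2 → 2 * (-Real.log (s - 1)) - (C1 + (p - 1) * C2) ≤
      ∑' k : ℕ, g k / (k : ℝ) ^ s := by
    intro s hs hs2
    have e : ∑' k : ℕ, g k / (k : ℝ) ^ s = ∑' k : ℕ, prInd 1 1 k / (k : ℝ) ^ s +
        (p - 1) * ∑' k : ℕ, prInd p 1 k / (k : ℝ) ^ s := by
      rw [← tsum_mul_left, ← (prInd_summable 1 1 hs).tsum_add ((prInd_summable p 1 hs).mul_left _)]
      refine tsum_congr fun k => ?_
      simp only [hg]; ring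
    have ha1 := h1 s ⟨hs, hs2⟩
    have ha2 := h2 s ⟨hs, hs2⟩
    rw [Nat.totient_one, Nat.cast_one, inv_one, one_mul] at ha1
    rw [Nat.totient_prime hp, Nat.cast_sub hp.one_le, Nat.cast_one] at ha2
    have ha3 := mul_le_mul_of_nonneg_left ha2 (by linarith : (0 : ℝ) ≤ p - 1)
    have : ((p : ℝ) - 1) ≠ 0 := by linarith
    rw [mul_sub, ← mul_assoc, mul_inv_cancel₀ this] at ha3
    rw [e]; linarith
  set D := (B' + 1) * p + C0 + (C1 + (p - 1) * C2) with hD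
  set ε := min (min (δ / 2) 1) (Real.exp (-D - 1)) with hε
  have hε0 : 0 < ε := by positivity
  have e1 : ε ≤ δ / 2 := (min_le_left _ _).trans (min_le_left _ _)
  have e2 : ε ≤ 1 := (min_le_left _ _).trans (min_le_right _ _)
  have e3 : Real.log ε ≤ -D - 1 := by
    rw [← Real.log_exp (-D - 1)]
    exact Real.log_le_log hε0 (min_le_right _ _)
  have k1 := key (1 + ε) (by linarith) (by linarith)
  have k2 := key2 (1 + ε) (by linarith) (by linarith)
  rw [add_sub_cancel_left] at k1 k2
  linarith

end lemmaA


open Polynomial NumberField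

section choosey

/-- the small primes occurring -/
def rho : Fin 6 → ℕ := ![2, 3, 5, 7, 11, 13]

lemma rho_prime (r : Fin 6) : (rho r).Prime := by
  fin_cases r <;> norm_num [rho]

lemma rho_le (r : Fin 6) : rho r ≤ 13 := by
  fin_cases r <;> norm_num [rho]

lemma rho_inj : Function.Injective rho := by decide

/-- the property that exponents are detected by reduction modulo `q ∈ T` -/
def Detects (T : Set ℕ) (p : ℕ) : Prop :=
  ∀ e : Fin 6 → ℤ, (∀ q ∈ T, ∀ _ : Fact q.Prime, 13 < q →
    ∃ β : ZMod q, β ^ p = ∏ r, ((rho r : ℕ) : ZMod q) ^ (e r)) → ∀ r, (p : ℤ) ∣ e r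

lemma rho_pow_val (f : Fin 6 → ℕ) (r : Fin 6) [Fact (rho r).Prime] :
    padicValNat (rho r) (∏ s, rho s ^ f s) = f r := by
  rw [← Nat.factorization_def _ (rho_prime r),
    Nat.factorization_prod (fun s _ => pow_ne_zero _ (rho_prime s).ne_zero), Finset.sum_apply']
  rw [Finset.sum_eq_single r]
  · rw [(rho_prime r).factorization_pow]; simp
  · intro s _ hs
    rw [(rho_prime s).factorization_pow, Finsupp.single_eq_of_ne]
    exact fun h => hs (rho_inj h).symm
  · simp

lemma exists_detects {p : ℕ} (hp : p.Prime) (B : ℕ) :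
    ∃ T : Finset ℕ, (∀ q ∈ T, q.Prime ∧ B < q) ∧ Detects (T : Set ℕ) p := by
  classical
  have := Fact.mk hp
  have h : ∀ E : Fin 6 → ZMod p, E ≠ 0 → ∃ q : ℕ, q.Prime ∧ B + 13 < q ∧
      ∀ c : ZMod q, c ^ p ≠ ((∏ s, rho s ^ (E s).val : ℕ) : ZMod q) := by
    intro E hE
    refine lemmaA hp _ ?_ _
    intro b hb
    apply hE
    funext r
    have := Fact.mk (rho_prime r)
    have h1 := congrArg (padicValRat (rho r)) hb
    have hb0 : b ≠ 0 := by
      rintro rfl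
      rw [zero_pow hp.ne_zero] at hb
      have h2 : (∏ s, rho s ^ (E s).val : ℕ) ≠ 0 :=
        Finset.prod_ne_zero_iff.mpr (fun s _ => pow_ne_zero _ (rho_prime s).ne_zero)
      exact h2 (by exact_mod_cast hb.symm)
    rw [padicValRat.pow, padicValRat.of_nat, rho_pow_val (fun s => (E s).val) r] at h1
    have h2 : p ∣ (E r).val := by
      have : (p : ℤ) ∣ ((E r).val : ℤ) := ⟨_, h1.symm⟩
      exact_mod_cast this
    have h3 := Nat.eq_zero_of_dvd_of_lt h2 (ZMod.val_lt _)
    simpa using h3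
  choose! Q hQ using h
  refine ⟨(Finset.univ.filter (fun E : Fin 6 → ZMod p => E ≠ 0)).image Q, ?_, ?_⟩
  · intro q hq
    obtain ⟨E, hE, rfl⟩ := Finset.mem_image.mp hq
    have := hQ E (Finset.mem_filter.mp hE).2
    exact ⟨this.1, by omega⟩
  · intro e he r
    rw [← ZMod.intCast_zmod_eq_zero_iff_dvd]
    by_contra hr
    set E : Fin 6 → ZMod p := fun s => (e s : ZMod p) with hE
    have hE0 : E ≠ 0 := fun h => hr (congrFun h r)
    obtain ⟨hq, hq13, hno⟩ := hQ E hE0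
    have hf := Fact.mk hq
    obtain ⟨β, hβ⟩ := he (Q E) (by
      simp only [Finset.coe_image, Set.mem_image, Finset.mem_coe, Finset.mem_filter,
        Finset.mem_univ, true_and]
      exact ⟨E, hE0, rfl⟩) hf (by omega)
    have hdv : ∀ s, ∃ m : ℤ, e s = ((E s).val : ℤ) + p * m := by
      intro s
      have : ((e s - ((E s).val : ℤ) : ℤ) : ZMod p) = 0 := by
        simp [hE]
      rw [ZMod.intCast_zmod_eq_zero_iff_dvd] at this
      obtain ⟨m, hm⟩ := this
      exact ⟨m, by linarith⟩
    choose m hm using hdv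
    have hρ0 : ∀ s, ((rho s : ℕ) : ZMod (Q E)) ≠ 0 := by
      intro s h
      rw [ZMod.natCast_eq_zero_iff] at h
      have := Nat.le_of_dvd (rho_prime s).pos h
      have := rho_le s
      omega
    refine hno (β * ∏ s, ((rho s : ℕ) : ZMod (Q E)) ^ (-m s)) ?_
    rw [mul_pow, hβ, ← Finset.prod_pow, ← Finset.prod_mul_distrib]
    push_cast
    refine Finset.prod_congr rfl fun s _ => ?_
    rw [← zpow_natCast, ← zpow_natCast, ← zpow_mul, ← zpow_add₀ (hρ0 s), hm s]
    congr 1; ring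

lemma Detects.mono {T T' : Set ℕ} {p : ℕ} (h : Detects T p) (hT : T ⊆ T') : Detects T' p :=
  fun e he => h e fun q hq => he q (hT hq)

lemma exists_y {n : ℕ} (hn : 1 < n) (hn6 : Nat.Coprime n 6) {Q : ℕ} (hQ : Q.Prime)
    (hQn : n < Q) (hQ13 : 13 < Q) (hQ1 : (Q : ZMod n) = -1) :
    ∃ y k : ℕ, 0 < y ∧ y ^ n = 7 ^ 6 + 388800 * k ∧ k % 4 = 2 ∧ Q ∣ k ∧ ¬ Q ^ 2 ∣ k ∧
      Nat.Coprime y 30030 ∧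
      (∀ p ∈ n.primeFactors, Detects {q | q.Prime ∧ q ∣ y} p) ∧
      ∃ q0 : ℕ, q0.Prime ∧ q0 ∣ y ∧ 13 < q0 ∧ ∀ p ∈ n.primeFactors, (q0 : ZMod p) ≠ 1 := by
  classical
  have hn2 : Nat.Coprime n 2 := hn6.coprime_dvd_right (by norm_num)
  have hn3 : Nat.Coprime n 3 := hn6.coprime_dvd_right (by norm_num)
  have hnodd : Odd n := Nat.coprime_two_right.mp hn2
  set B := Q + n + 13 + 7 ^ 6 with hB
  -- test primes
  have hT : ∀ p : ℕ, ∃ T : Finset ℕ, p.Prime → (∀ q ∈ T, q.Prime ∧ B < q) ∧ Detects (T : Set ℕ) p := by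
    intro p
    by_cases hp : p.Prime
    · obtain ⟨T, h⟩ := exists_detects hp B
      exact ⟨T, fun _ => h⟩
    · exact ⟨∅, fun h => absurd h hp⟩
  choose T0 hT0 using hT
  have : NeZero n := ⟨by omega⟩
  obtain ⟨q0, hq0B, hq0, hq0n⟩ := Nat.forall_exists_prime_gt_and_eq_mod
    (q := n) (a := -1) (isUnit_one.neg) B
  set T := insert q0 (n.primeFactors.biUnion T0) with hTdef
  have hTp : ∀ q ∈ T, q.Prime ∧ B < q := by
    intro q hq
    rcases Finset.mem_insert.mp hq with rfl | hq
    · exact ⟨hq0, hq0B⟩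
    · obtain ⟨p, hp, hq⟩ := Finset.mem_biUnion.mp hq
      exact (hT0 p (Nat.prime_of_mem_primeFactors hp)).1 q hq
  set N := ∏ q ∈ T, q with hN
  -- the root mod M
  set M := 2 ^ 8 * 3 ^ 5 * Q ^ 2 with hM
  have hM0 : 0 < M := by have := hQ.pos; positivity
  have hQsmall : ∀ l : ℕ, l.Prime → l ≤ 13 → Nat.Coprime l Q := fun l hl h =>
    (Nat.coprime_primes hl hQ).mpr (by omega)
  have hc2 := hQsmall 2 (by norm_num) (by norm_num)
  have hc3 := hQsmall 3 (by norm_num) (by norm_num)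
  have hc7 := hQsmall 7 (by norm_num) (by norm_num)
  have hQ1' : Nat.Coprime n (Q - 1) := by
    refine Nat.Coprime.symm (Nat.coprime_of_dvd fun l hl h1 h2 => ?_)
    have h3 : ((Q : ℕ) : ZMod l) = -1 := by
      have := congrArg (ZMod.castHom h2 (ZMod l)) hQ1
      rw [map_natCast, map_neg, map_one] at this; exact this
    have h4 : ((Q - 1 : ℕ) : ZMod l) = 0 := (ZMod.natCast_eq_zero_iff _ _).mpr h1
    rw [Nat.cast_sub hQ.one_le, h3] at h4
    have h5 : ((2 : ℕ) : ZMod l) = 0 := by push_cast at h4 ⊢; linear_combination -h4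
    rw [ZMod.natCast_eq_zero_iff] at h5
    have := (Nat.prime_dvd_prime_iff_eq hl Nat.prime_two).mp h5
    subst this
    exact absurd (Nat.dvd_gcd h2 dvd_rfl) (by rw [hn2]; norm_num)
  have hcop : Nat.Coprime n M.totient := by
    rw [hM, Nat.totient_mul (Nat.Coprime.mul_left (hc2.pow _ _) (hc3.pow _ _)),
      Nat.totient_mul (by norm_num), Nat.totient_prime_pow Nat.prime_two (by norm_num),
      Nat.totient_prime_pow Nat.prime_three (by norm_num), Nat.totient_prime_pow hQ (by norm_num)]
    have hnQ : Nat.Coprime n Q := ((Nat.Prime.coprime_iff_not_dvd hQ).mpr (fun h => by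
      have := Nat.le_of_dvd (by omega) h; omega)).symm
    norm_num
    refine Nat.Coprime.mul_right ?_ ?_
    · rw [show (20736 : ℕ) = 2 ^ 8 * 3 ^ 4 by norm_num]
      exact Nat.Coprime.mul_right (hn2.pow_right _) (hn3.pow_right _)
    · exact Nat.Coprime.mul_right hnQ hQ1'
  set u := 7 ^ 6 + 2 * 388800 * Q with hu
  have hucop : Nat.Coprime u M := by
    rw [hM]
    refine Nat.Coprime.mul_right (Nat.Coprime.mul_right (Nat.Coprime.pow_right _ ?_)
      (Nat.Coprime.pow_right _ ?_)) (Nat.Coprime.pow_right _ ?_)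
    · rw [Nat.coprime_two_right]; refine Odd.add_even (by decide) ?_
      exact ⟨388800 * Q, by ring⟩
    · rw [hu, show 7 ^ 6 + 2 * 388800 * Q = 7 ^ 6 + 3 * (259200 * Q) by ring]
      simp
      norm_num
    · rw [hu]; simp
      exact hc7.pow_left 6
  obtain ⟨y1, hy1⟩ : ∃ y1 : ℕ, y1 ^ n ≡ u [MOD M] := by
    have : NeZero M := ⟨hM0.ne'⟩
    have hb : Nat.Coprime (Nat.card (ZMod M)ˣ) n := by
      rw [Nat.card_eq_fintype_card, ZMod.card_units_eq_totient]; exact hcop.symm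
    obtain ⟨v, hv⟩ := (powCoprime hb).surjective (ZMod.unitOfCoprime u hucop)
    refine ⟨(v : ZMod M).val, ?_⟩
    rw [← ZMod.natCast_eq_natCast_iff]
    have := congrArg Units.val hv
    simp only [powCoprime_apply, Units.val_pow_eq_pow_val, ZMod.coe_unitOfCoprime] at this
    push_cast at this ⊢
    rw [ZMod.natCast_zmod_val]
    exact this
  -- CRT
  have hNc : ∀ l : ℕ, l.Prime → l ≤ B → Nat.Coprime N l := by
    intro l hl hle
    refine Nat.Coprime.prod_left fun q hq => ?_
    exact (Nat.coprime_primes (hTp q hq).1 hl).mpr (by have := (hTp q hq).2; omega)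
  have hM25 : Nat.Coprime M 25 := by
    have h5 := hQsmall 5 (by norm_num) (by norm_num)
    rw [hM, show 25 = 5 ^ 2 by norm_num]
    exact Nat.Coprime.mul_left (by norm_num) (h5.symm.pow _ _)
  have h1001 : Nat.Coprime (M * 25) 1001 := by
    have h11 := hQsmall 11 (by norm_num) (by norm_num)
    have h13 := hQsmall 13 (by norm_num) (by norm_num)
    rw [hM]
    refine Nat.Coprime.mul_left (Nat.Coprime.mul_left (by norm_num) ?_) (by norm_num)
    rw [show 1001 = 7 * 11 * 13 by norm_num]
    exact Nat.Coprime.pow_left _ (Nat.Coprime.mul_right (Nat.Coprime.mul_right hc7.symm h11.symm) h13.symm)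
  have hNall : Nat.Coprime (M * 25 * 1001) N := by
    have := hNc 2 (by norm_num) (by omega)
    have := hNc 3 (by norm_num) (by omega)
    have := hNc 5 (by norm_num) (by omega)
    have := hNc 7 (by norm_num) (by omega)
    have := hNc 11 (by norm_num) (by omega)
    have := hNc 13 (by norm_num) (by omega)
    have := hNc Q hQ (by omega)
    rw [Nat.coprime_comm, hM, show 25 = 5 ^ 2 by norm_num, show 1001 = 7 * 11 * 13 by norm_num]
    refine Nat.Coprime.mul_right (Nat.Coprime.mul_right (Nat.Coprime.mul_right (Nat.Coprime.mul_right ?_ ?_) ?_) ?_)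
      (Nat.Coprime.mul_right (Nat.Coprime.mul_right ?_ ?_) ?_) <;>
    first | assumption | (refine Nat.Coprime.pow_right _ ?_; assumption)
  obtain ⟨z1, hz1, hz1'⟩ := Nat.chineseRemainder hM25 y1 24
  obtain ⟨z2, hz2, hz2'⟩ := Nat.chineseRemainder h1001 z1 1
  obtain ⟨y, hy, hyN⟩ := Nat.chineseRemainder hNall z2 0
  have hy1001 : y ≡ 1 [MOD 1001] := (hy.of_mul_left _).trans hz2'
  have hyM25 : y ≡ z1 [MOD M * 25] := (hy.of_mul_right _).trans hz2
  have hy25 : y ≡ 24 [MOD 25] := (hyM25.of_mul_left _).trans hz1'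
  have hyM : y ≡ y1 [MOD M] := (hyM25.of_mul_right _).trans hz1
  have hNy : N ∣ y := (Nat.modEq_zero_iff_dvd).mp hyN
  have hynM : y ^ n ≡ u [MOD M] := (hyM.pow n).trans hy1
  have hyn25 : y ^ n ≡ 7 ^ 6 [MOD 25] := by
    rw [← ZMod.natCast_eq_natCast_iff] at hy25 ⊢
    push_cast
    rw [hy25, show ((24 : ℕ) : ZMod 25) = -1 by decide, hnodd.neg_one_pow]
    decide
  have hy0 : 0 < y := by
    rcases Nat.eq_zero_or_pos y with h | h
    · rw [h] at hy1001; exact absurd hy1001 (by decide)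
    · exact h
  have hq0y : q0 ∣ y := (Finset.dvd_prod_of_mem _ (Finset.mem_insert_self _ _)).trans hNy
  have hybig : 7 ^ 6 < y ^ n := by
    have := Nat.le_of_dvd hy0 hq0y
    have h2 : y ^ 1 ≤ y ^ n := Nat.pow_le_pow_right hy0 (by omega)
    rw [pow_one] at h2
    omega
  -- k
  have hIM : (M : ℤ) ∣ (y : ℤ) ^ n - (7 ^ 6 + 2 * 388800 * Q) := by
    have := (Nat.modEq_iff_dvd.mp hynM.symm)
    rw [hu] at this; push_cast at this; exact this
  have hI25 : (25 : ℤ) ∣ (y : ℤ) ^ n - 7 ^ 6 := by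
    have := (Nat.modEq_iff_dvd.mp hyn25.symm)
    push_cast at this; exact this
  obtain ⟨m, hm⟩ := hIM
  have hMz : (M : ℤ) = 15552 * (4 * Q ^ 2) := by rw [hM]; push_cast; ring
  have h15552 : (15552 : ℤ) ∣ (y : ℤ) ^ n - 7 ^ 6 :=
    ⟨4 * Q ^ 2 * m + 50 * Q, by rw [hMz] at hm; linear_combination hm⟩
  have hk : (388800 : ℤ) ∣ (y : ℤ) ^ n - 7 ^ 6 := by
    have : IsCoprime (15552 : ℤ) 25 := by norm_num
    have := this.mul_dvd h15552 hI25
    norm_num at this ⊢; exact this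
  have hk' : 388800 ∣ y ^ n - 7 ^ 6 := by
    zify [hybig.le]; exact hk
  obtain ⟨k, hk⟩ := hk'
  have hyk : y ^ n = 7 ^ 6 + 388800 * k := by omega
  have hkey : (25 : ℤ) * k = 50 * Q + 4 * Q ^ 2 * m := by
    have h1 : (y : ℤ) ^ n = 7 ^ 6 + 388800 * k := by exact_mod_cast hyk
    rw [hMz, h1] at hm
    linarith
  have hQodd : Q % 2 = 1 := by
    rcases hQ.eq_two_or_odd with h | h <;> omega
  have hQ5 := hQsmall 5 (by norm_num) (by norm_num)
  refine ⟨y, k, hy0, hyk, ?_, ?_, ?_, ?_, ?_, q0, hq0, hq0y, by omega, ?_⟩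
  · obtain ⟨j, hj⟩ : ∃ j, Q = 2 * j + 1 := ⟨Q / 2, by omega⟩
    have h1 : (25 : ℤ) * k = 50 * (2 * j + 1) + 4 * ((2 * j + 1) ^ 2 * m) := by
      rw [hkey, hj]; push_cast; ring
    generalize ((2 * (j : ℤ) + 1) ^ 2 * m) = w at h1
    omega
  · have : (Q : ℤ) ∣ 25 * k := ⟨50 + 4 * Q * m, by rw [hkey]; ring⟩
    have h2 : Q ∣ 5 ^ 2 * k := by norm_num; exact_mod_cast this
    exact (Nat.Coprime.pow_right 2 hQ5.symm).dvd_of_dvd_mul_left h2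
  · rintro ⟨j, hj⟩
    have hQ0 : (Q : ℤ) ≠ 0 := by exact_mod_cast hQ.ne_zero
    have h3 : (50 : ℤ) = Q * (25 * j - 4 * m) := by
      apply mul_left_cancel₀ hQ0
      rw [hj] at hkey; push_cast at hkey
      linear_combination -hkey
    have h4 : (Q : ℤ) ∣ 50 := ⟨_, h3⟩
    have h5 : Q ∣ 2 * 5 ^ 2 := by norm_num; exact_mod_cast h4
    rcases (Nat.Prime.dvd_mul hQ).mp h5 with h | h
    · have := Nat.le_of_dvd (by norm_num) h; omega
    · have := Nat.le_of_dvd (by norm_num) (hQ.dvd_of_dvd_pow h); omega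
  · have h30 : Nat.Coprime (y ^ n) 30 := by
      rw [hyk, show 7 ^ 6 + 388800 * k = 7 ^ 6 + 30 * (12960 * k) by ring]
      simp
      norm_num
    have h1 : Nat.Coprime y 30 := Nat.Coprime.coprime_dvd_left (dvd_pow_self y (by omega)) h30
    have h2 : Nat.Coprime y 1001 := by
      have := hy1001.gcd_eq
      rw [Nat.Coprime, this]; norm_num
    rw [show 30030 = 30 * 1001 by norm_num]
    exact h1.mul_right h2
  · intro p hp
    refine (hT0 p (Nat.prime_of_mem_primeFactors hp)).2.mono fun q hq => ?_
    have hqT : q ∈ T := Finset.mem_insert_of_mem (Finset.mem_biUnion.mpr ⟨p, hp, hq⟩)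
    exact ⟨(hTp q hqT).1, (Finset.dvd_prod_of_mem _ hqT).trans hNy⟩
  · intro p hp h
    have hpp := Nat.prime_of_mem_primeFactors hp
    have h3 : ((q0 : ℕ) : ZMod p) = -1 := by
      have := congrArg (ZMod.castHom (Nat.dvd_of_mem_primeFactors hp) (ZMod p)) hq0n
      rw [map_natCast, map_neg, map_one] at this; exact this
    rw [h3] at h
    have h5 : ((2 : ℕ) : ZMod p) = 0 := by push_cast; linear_combination -h
    rw [ZMod.natCast_eq_zero_iff] at h5
    have := (Nat.prime_dvd_prime_iff_eq hpp Nat.prime_two).mp h5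
    subst this
    exact absurd (Nat.dvd_gcd (Nat.dvd_of_mem_primeFactors hp) dvd_rfl) (by rw [hn2]; norm_num)

end choosey


open Polynomial NumberField

section gpol

/-- the integral model of the polynomial -/
noncomputable def gpoly (k : ℤ) : ℤ[X] :=
  (X ^ 2 - X + 1) ^ 6 + C (27 * k) * (X * (X - 1) * (X + 1) * (X - 2) * (2 * X - 1)) ^ 2

lemma phi_monic {R : Type*} [CommRing R] [Nontrivial R] : (X ^ 2 - X + 1 : R[X]).Monic := by
  monicity!

lemma phi_natDegree {R : Type*} [CommRing R] [Nontrivial R] : (X ^ 2 - X + 1 : R[X]).natDegree = 2 := by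
  compute_degree!

lemma b_natDegree_le : ((X * (X - 1) * (X + 1) * (X - 2) * (2 * X - 1)) : ℤ[X]).natDegree ≤ 5 := by
  compute_degree

lemma gpoly_aux (k : ℤ) : (C (27 * k) * (X * (X - 1) * (X + 1) * (X - 2) * (2 * X - 1)) ^ 2 : ℤ[X]).degree
    < ((X ^ 2 - X + 1 : ℤ[X]) ^ 6).degree := by
  rw [degree_eq_natDegree (phi_monic.pow 6).ne_zero, phi_monic.natDegree_pow, phi_natDegree]
  refine lt_of_le_of_lt degree_le_natDegree ?_
  have h1 := natDegree_C_mul_le (27 * k) ((X * (X - 1) * (X + 1) * (X - 2) * (2 * X - 1)) ^ 2 : ℤ[X])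
  have h2 := natDegree_pow_le (p := ((X * (X - 1) * (X + 1) * (X - 2) * (2 * X - 1)) : ℤ[X])) (n := 2)
  have h3 := b_natDegree_le
  exact_mod_cast (by omega : _ < 6 * 2)

lemma gpoly_monic (k : ℤ) : (gpoly k).Monic := (phi_monic.pow 6).add_of_left (gpoly_aux k)

lemma gpoly_natDegree (k : ℤ) : (gpoly k).natDegree = 12 := by
  rw [gpoly, natDegree_add_eq_left_of_degree_lt (gpoly_aux k), phi_monic.natDegree_pow, phi_natDegree]

lemma phi_irr : Irreducible (X ^ 2 - X + 1 : (ZMod 2)[X]) := by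
  refine (Monic.irreducible_iff_roots_eq_zero_of_degree_le_three phi_monic ?_ ?_).mpr ?_
  · rw [phi_natDegree]
  · rw [phi_natDegree]; norm_num
  · rw [Multiset.eq_zero_iff_forall_notMem]
    intro a ha
    have := (mem_roots'.mp ha).2
    simp [IsRoot] at this

lemma gpoly_irreducible_int {k : ℤ} (hk : k % 4 = 2) : Irreducible (gpoly k) := by
  obtain ⟨j, rfl⟩ : ∃ j, k = 4 * j + 2 := ⟨k / 4, by omega⟩
  have hker : RingHom.ker (algebraMap ℤ (ZMod 2)) = Ideal.span {2} := by
    have := ZMod.ker_intCastRingHom 2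
    simpa using this
  refine generalizedEisenstein (K := ZMod 2) (q := X ^ 2 - X + 1) (p := 6) ?_ phi_monic
    (gpoly_monic _).isPrimitive ?_ ?_ ?_ ?_
  · simpa using phi_irr
  · rw [gpoly_natDegree]; norm_num
  · rw [(gpoly_monic _).leadingCoeff]; simp
  · rw [(gpoly_monic _).leadingCoeff]
    have h2 : (2 : (ZMod 2)[X]) = 0 := by
      have := CharP.cast_eq_zero (ZMod 2)[X] 2
      exact_mod_cast this
    simp only [gpoly, Polynomial.map_add, Polynomial.map_pow, Polynomial.map_mul, Polynomial.map_sub,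
      map_X, Polynomial.map_one, map_C, map_one, one_mul]
    have : ((algebraMap ℤ (ZMod 2)) (27 * (4 * j + 2))) = 0 := by
      rw [← RingHom.mem_ker, hker, Ideal.mem_span_singleton]
      exact ⟨27 * (2 * j + 1), by ring⟩
    rw [this]; simp
  · have hmod : gpoly (4 * j + 2) %ₘ (X ^ 2 - X + 1) = C (-729 * (4 * j + 2)) := by
      refine (div_modByMonic_unique ((X ^ 2 - X + 1) ^ 5 + C (27 * (4 * j + 2)) *
        (4 * (X ^ 2 - X + 1) ^ 4 - 35 * (X ^ 2 - X + 1) ^ 3 + 112 * (X ^ 2 - X + 1) ^ 2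
          - 162 * (X ^ 2 - X + 1) + 108)) _ phi_monic ⟨?_, ?_⟩).2
      · have : (C (-729 * (4 * j + 2)) : ℤ[X]) = -27 * C (27 * (4 * j + 2)) := by
          rw [← C_ofNat, ← C_neg, ← C_mul]; congr 1; ring
        rw [gpoly, this]; ring
      · rw [degree_eq_natDegree phi_monic.ne_zero, phi_natDegree]
        exact lt_of_le_of_lt degree_C_le (by norm_num)
    rw [hmod, map_C, Ne, C_eq_zero, Ideal.Quotient.eq_zero_iff_mem, hker,
      Ideal.span_singleton_pow, Ideal.mem_span_singleton]
    omega

lemma gpoly_irreducible {k : ℤ} (hk : k % 4 = 2) :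
    Irreducible ((gpoly k).map (Int.castRingHom ℚ)) :=
  ((gpoly_monic k).irreducible_iff_irreducible_map_fraction_map (K := ℚ)).mp
    (gpoly_irreducible_int hk)

lemma aeval_gpoly {F : Type*} [CommRing F] (k : ℤ) (t : F) : aeval t (gpoly k) =
    (t ^ 2 - t + 1) ^ 6 + 27 * k * (t * (t - 1) * (t + 1) * (t - 2) * (2 * t - 1)) ^ 2 := by
  simp [gpoly, map_ofNat]

lemma P_eq (n y k : ℕ) (h : y ^ n = 7 ^ 6 + 388800 * k) :
    ((X + 2) * (2 * X + 1) * (X - 3) * (3 * X - 1) * (X + 4) * (4 * X + 1) *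
            (X - 5) * (5 * X - 1) * (2 * X - 3) * (3 * X - 2) * (4 * X - 5) * (5 * X - 4) +
          C ((y : ℚ) ^ n) *
            (X ^ 2 * (X - 1) ^ 2 * (X + 1) ^ 2 * (X - 2) ^ 2 * (2 * X - 1) ^ 2) : ℚ[X]) =
    C 14400 * (gpoly k).map (Int.castRingHom ℚ) := by
  have h1 : (y : ℚ) ^ n = 7 ^ 6 + 388800 * k := by exact_mod_cast h
  rw [h1]
  simp only [gpoly, Polynomial.map_add, Polynomial.map_pow, Polynomial.map_mul, Polynomial.map_sub,
      map_X, Polynomial.map_one, Polynomial.map_ofNat, map_mul, C_add,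
      C_pow, map_ofNat, map_natCast, Polynomial.map_natCast]
  ring

end gpol


open Polynomial NumberField

section mobius

variable {F : Type*} [Field F]

/-- the orbit of `t` under the dihedral group of Moebius transformations -/
def mo (t : F) : DihedralGroup 6 → F
  | .r i => (![t, (t + 1) / (2 - t), 1 / (1 - t), (2 - t) / (1 - 2 * t), (t - 1) / t,
      (2 * t - 1) / (t + 1)] : Fin 6 → F) i
  | .sr i => (![1 / t, (1 + t) / (2 * t - 1), t / (t - 1), (2 * t - 1) / (t - 2), 1 - t,
      (2 - t) / (1 + t)] : Fin 6 → F) i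

lemma map_mo {F' : Type*} [Field F'] (f : F →+* F') (t : F) (d : DihedralGroup 6) :
    f (mo t d) = mo (f t) d := by
  rcases d with i | i <;> fin_cases i <;> simp [mo, map_ofNat]

/-- genericity of `t` -/
def Gen (t : F) : Prop := t ≠ 0 ∧ t - 1 ≠ 0 ∧ t + 1 ≠ 0 ∧ t - 2 ≠ 0 ∧ 2 * t - 1 ≠ 0

lemma gen_of_root [CharZero F] {k : ℤ} {t : F} (h : aeval t (gpoly k) = 0) : Gen t := by
  rw [aeval_gpoly] at h
  refine ⟨?_, ?_, ?_, ?_, ?_⟩ <;> intro h0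
  · rw [h0] at h; norm_num at h
  · rw [sub_eq_zero.mp h0] at h; norm_num at h
  · rw [eq_neg_of_add_eq_zero_left h0] at h; norm_num at h
  · rw [sub_eq_zero.mp h0] at h; norm_num at h
  · have : t = 1 / 2 := by field_simp; linear_combination h0
    rw [this] at h; norm_num at h

lemma Gen.neg {t : F} (h : Gen t) : 1 - t ≠ 0 ∧ 1 + t ≠ 0 ∧ 2 - t ≠ 0 ∧ 1 - 2 * t ≠ 0 := by
  obtain ⟨h0, h1, h2, h3, h4⟩ := h
  refine ⟨?_, ?_, ?_, ?_⟩ <;> intro h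
  · exact h1 (by linear_combination -h)
  · exact h2 (by linear_combination h)
  · exact h3 (by linear_combination -h)
  · exact h4 (by linear_combination -h)

lemma mo_R [CharZero F] {t : F} (h : Gen t) (i : ZMod 6) :
    mo ((t + 1) / (2 - t)) (.r i) = mo t (.r (i + 1)) := by
  obtain ⟨g1, g2, g3, g4⟩ := h.neg
  obtain ⟨h0, h1, h2, h3, h4⟩ := h
  have h3' : (3 : F) ≠ 0 := by norm_num
  have e1 : (t + 1) / (2 - t) + 1 = 3 / (2 - t) := by field_simp; ring
  have e2 : 1 - (t + 1) / (2 - t) = (1 - 2 * t) / (2 - t) := by field_simp; ring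
  have e3 : 2 - (t + 1) / (2 - t) = 3 * (1 - t) / (2 - t) := by field_simp; ring
  have e4 : 2 * ((t + 1) / (2 - t)) - 1 = 3 * t / (2 - t) := by field_simp; ring
  have e5 : 1 - 2 * ((t + 1) / (2 - t)) = - (3 * t) / (2 - t) := by field_simp; ring
  have e6 : (t + 1) / (2 - t) - 1 = (2 * t - 1) / (2 - t) := by field_simp; ring
  fin_cases i
  · rfl
  · change ((t + 1) / (2 - t) + 1) / (2 - (t + 1) / (2 - t)) = 1 / (1 - t)
    rw [e1, e3]; field_simp
  · change 1 / (1 - (t + 1) / (2 - t)) = (2 - t) / (1 - 2 * t)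
    rw [e2]; field_simp
  · change (2 - (t + 1) / (2 - t)) / (1 - 2 * ((t + 1) / (2 - t))) = (t - 1) / t
    rw [e3, e5]; field_simp; ring
  · change ((t + 1) / (2 - t) - 1) / ((t + 1) / (2 - t)) = (2 * t - 1) / (t + 1)
    rw [e6]; field_simp
  · change (2 * ((t + 1) / (2 - t)) - 1) / ((t + 1) / (2 - t) + 1) = t
    rw [e4, e1]; field_simp

lemma mo_S {t : F} (h : Gen t) (i : ZMod 6) :
    mo (1 / t) (.r i) = mo t (.sr i) := by
  obtain ⟨g1, g2, g3, g4⟩ := h.neg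
  obtain ⟨h0, h1, h2, h3, h4⟩ := h
  have e1 : 1 / t + 1 = (1 + t) / t := by field_simp
  have e2 : 1 - 1 / t = (t - 1) / t := by field_simp
  have e3 : 2 - 1 / t = (2 * t - 1) / t := by field_simp
  have e4 : 2 * (1 / t) - 1 = (2 - t) / t := by field_simp
  have e5 : 1 - 2 * (1 / t) = (t - 2) / t := by field_simp
  have e6 : 1 / t - 1 = (1 - t) / t := by field_simp
  fin_cases i
  · simp [mo]
  · change (1 / t + 1) / (2 - 1 / t) = (1 + t) / (2 * t - 1)
    rw [e1, e3]; field_simp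
  · change 1 / (1 - 1 / t) = t / (t - 1)
    rw [e2]; field_simp
  · change (2 - 1 / t) / (1 - 2 * (1 / t)) = (2 * t - 1) / (t - 2)
    rw [e3, e5]; field_simp
  · change (1 / t - 1) / (1 / t) = 1 - t
    rw [e6]; field_simp
  · change (2 * (1 / t) - 1) / (1 / t + 1) = (2 - t) / (1 + t)
    rw [e4, e1]; field_simp

lemma root_R [CharZero F] {k : ℤ} {t : F} (h : aeval t (gpoly k) = 0) :
    aeval ((t + 1) / (2 - t)) (gpoly k) = 0 := by
  have hg := (gen_of_root h).neg.2.2.1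
  have hg2 : (2 - t) ^ 12 ≠ 0 := pow_ne_zero _ hg
  rw [aeval_gpoly] at *
  have e1 : (t + 1) / (2 - t) + 1 = 3 / (2 - t) := by field_simp; ring
  have e3 : (t + 1) / (2 - t) - 2 = 3 * (t - 1) / (2 - t) := by field_simp; ring
  have e4 : 2 * ((t + 1) / (2 - t)) - 1 = 3 * t / (2 - t) := by field_simp; ring
  have e6 : (t + 1) / (2 - t) - 1 = (2 * t - 1) / (2 - t) := by field_simp; ring
  have e7 : ((t + 1) / (2 - t)) ^ 2 - (t + 1) / (2 - t) + 1 = 3 * (t ^ 2 - t + 1) / (2 - t) ^ 2 := by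
    field_simp; ring
  rw [e1, e3, e4, e6, e7]
  have : (3 * (t ^ 2 - t + 1) / (2 - t) ^ 2) ^ 6 + 27 * (k : F) * ((t + 1) / (2 - t) *
      ((2 * t - 1) / (2 - t)) * (3 / (2 - t)) * (3 * (t - 1) / (2 - t)) * (3 * t / (2 - t))) ^ 2 =
      3 ^ 6 * ((t ^ 2 - t + 1) ^ 6 + 27 * k * (t * (t - 1) * (t + 1) * (t - 2) * (2 * t - 1)) ^ 2) /
        (2 - t) ^ 12 := by
    rw [show t - 2 = -(2 - t) by ring]
    field_simp
  rw [this, h]; simp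

lemma root_S [CharZero F] {k : ℤ} {t : F} (h : aeval t (gpoly k) = 0) :
    aeval (1 / t) (gpoly k) = 0 := by
  have h0 := (gen_of_root h).1
  rw [aeval_gpoly] at *
  have : ((1 / t) ^ 2 - 1 / t + 1) ^ 6 + 27 * (k : F) * (1 / t * (1 / t - 1) * (1 / t + 1) * (1 / t - 2) *
      (2 * (1 / t) - 1)) ^ 2 = ((t ^ 2 - t + 1) ^ 6 + 27 * k * (t * (t - 1) * (t + 1) * (t - 2) * (2 * t - 1)) ^ 2) /
        t ^ 12 := by
    field_simp
    ring
  rw [this, h]; simp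

/-- two coincidences of orbit points force a quadratic equation -/
lemma mo_coinc [CharZero F] {t : F} (h : Gen t) {d : DihedralGroup 6} (hd : d ≠ 1)
    (heq : mo t d = t) : ∃ p : ℤ[X], p ≠ 0 ∧ p.natDegree ≤ 2 ∧ aeval t p = 0 := by
  obtain ⟨g1, g2, g3, g4⟩ := h.neg
  obtain ⟨h0, h1, h2, h3, h4⟩ := h
  suffices hh : ∃ a b c : ℤ, (a ≠ 0 ∨ b ≠ 0 ∨ c ≠ 0) ∧ (a : F) * t ^ 2 + b * t + c = 0 by
    obtain ⟨a, b, c, hne, hz⟩ := hh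
    refine ⟨C a * X ^ 2 + C b * X + C c, ?_, ?_, ?_⟩
    · intro hp
      have e0 := congrArg (fun p => coeff p 0) hp
      have e1 := congrArg (fun p => coeff p 1) hp
      have e2 := congrArg (fun p => coeff p 2) hp
      simp only [coeff_add, coeff_C_mul, coeff_X_pow, coeff_X, coeff_C, coeff_zero] at e0 e1 e2
      norm_num at e0 e1 e2
      tauto
    · compute_degree
    · simpa using hz
  rcases d with i | i <;> fin_cases i
  · exact absurd rfl hd
  · change (t + 1) / (2 - t) = t at heq
    rw [div_eq_iff g3] at heq
    exact ⟨1, -1, 1, by norm_num, by push_cast; linear_combination heq⟩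
  · change 1 / (1 - t) = t at heq
    rw [div_eq_iff g1] at heq
    exact ⟨1, -1, 1, by norm_num, by push_cast; linear_combination heq⟩
  · change (2 - t) / (1 - 2 * t) = t at heq
    rw [div_eq_iff g4] at heq
    exact ⟨2, -2, 2, by norm_num, by push_cast; linear_combination heq⟩
  · change (t - 1) / t = t at heq
    rw [div_eq_iff h0] at heq
    exact ⟨-1, 1, -1, by norm_num, by push_cast; linear_combination heq⟩
  · change (2 * t - 1) / (t + 1) = t at heq
    rw [div_eq_iff h2] at heq
    exact ⟨-1, 1, -1, by norm_num, by push_cast; linear_combination heq⟩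
  · change 1 / t = t at heq
    rw [div_eq_iff h0] at heq
    exact ⟨-1, 0, 1, by norm_num, by push_cast; linear_combination heq⟩
  · change (1 + t) / (2 * t - 1) = t at heq
    rw [div_eq_iff h4] at heq
    exact ⟨-2, 2, 1, by norm_num, by push_cast; linear_combination heq⟩
  · change t / (t - 1) = t at heq
    rw [div_eq_iff h1] at heq
    exact ⟨-1, 2, 0, by norm_num, by push_cast; linear_combination heq⟩
  · change (2 * t - 1) / (t - 2) = t at heq
    rw [div_eq_iff h3] at heq
    exact ⟨-1, 4, -1, by norm_num, by push_cast; linear_combination heq⟩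
  · change 1 - t = t at heq
    exact ⟨0, -2, 1, by norm_num, by push_cast; linear_combination heq⟩
  · change (2 - t) / (1 + t) = t at heq
    rw [div_eq_iff g2] at heq
    exact ⟨-1, -2, 2, by norm_num, by push_cast; linear_combination heq⟩

end mobius

section dihedral

lemma dihedral_lift {G : Type*} [Group G] (R S : G) (hR : R ^ 6 = 1) (hS : S * S = 1)
    (hSR : S * R * S = R⁻¹) :
    ∃ f : DihedralGroup 6 →* G, (∀ i, f (.r i) = R ^ i.val) ∧ ∀ i, f (.sr i) = S * R ^ i.val := by
  have hadd : ∀ i j : ZMod 6, R ^ (i + j).val = R ^ i.val * R ^ j.val := by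
    intro i j
    rw [ZMod.val_add, ← pow_eq_pow_mod _ hR, pow_add]
  have hneg : ∀ i : ZMod 6, R ^ (-i).val = (R ^ i.val)⁻¹ := by
    intro i
    rw [eq_inv_iff_mul_eq_one, ← hadd]; simp
  have hS' : S⁻¹ = S := inv_eq_of_mul_eq_one_left hS
  have hconj : ∀ m : ℕ, S * R ^ m * S = (R ^ m)⁻¹ := by
    intro m
    rw [← inv_pow, ← hSR]
    nth_rw 2 [← hS']
    nth_rw 4 [← hS']
    rw [conj_pow]
  have hcm : ∀ m : ℕ, R ^ m * S = S * (R ^ m)⁻¹ := by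
    intro m
    rw [← hconj m, ← mul_assoc, ← mul_assoc, hS, one_mul]
  let f : DihedralGroup 6 → G := fun d => match d with
    | .r i => R ^ i.val
    | .sr i => S * R ^ i.val
  refine ⟨MonoidHom.mk' f ?_, fun _ => rfl, fun _ => rfl⟩
  rintro (i | i) (j | j)
  · exact hadd i j
  · change S * R ^ (j - i).val = R ^ i.val * (S * R ^ j.val)
    rw [← mul_assoc, hcm, mul_assoc, ← hneg, ← hadd]; congr 3; ring
  · change S * R ^ (i + j).val = S * R ^ i.val * R ^ j.val
    rw [hadd, mul_assoc]
  · change R ^ (j - i).val = S * R ^ i.val * (S * R ^ j.val)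
    rw [← mul_assoc, hconj, ← hneg, ← hadd]; congr 2; ring

end dihedral


open Polynomial NumberField

section galois

variable {K : Type*} [Field K] [NumberField K]

/-- the standing hypotheses on a generator -/
def IsGoodGen (pb : PowerBasis ℚ K) (k : ℤ) : Prop :=
  minpoly ℚ pb.gen = (gpoly k).map (Int.castRingHom ℚ)

lemma IsGoodGen.aeval_minpoly {pb : PowerBasis ℚ K} {k : ℤ} (h : IsGoodGen pb k) {L : Type*} [Field L]
    [Algebra ℚ L] (t : L) : aeval t (minpoly ℚ pb.gen) = aeval t (gpoly k) := by
  rw [h]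
  exact aeval_map_algebraMap ℚ t (gpoly k)

lemma IsGoodGen.root {pb : PowerBasis ℚ K} {k : ℤ} (h : IsGoodGen pb k) :
    aeval pb.gen (gpoly k) = 0 := by
  rw [← h.aeval_minpoly, minpoly.aeval]

lemma IsGoodGen.finrank {pb : PowerBasis ℚ K} {k : ℤ} (h : IsGoodGen pb k) :
    Module.finrank ℚ K = 12 := by
  rw [pb.finrank, ← pb.natDegree_minpoly, h, (gpoly_monic k).natDegree_map, gpoly_natDegree]

lemma IsGoodGen.galois {pb : PowerBasis ℚ K} {k : ℤ} (h : IsGoodGen pb k) :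
    ∃ ρ : DihedralGroup 6 ≃* (K ≃ₐ[ℚ] K), (∀ d, ρ d pb.gen = mo pb.gen d) ∧ IsGalois ℚ K := by
  set θ := pb.gen with hθ
  have hroot : aeval θ (gpoly k) = 0 := h.root
  have hgen := gen_of_root hroot
  have hR0 : aeval ((θ + 1) / (2 - θ)) (minpoly ℚ pb.gen) = 0 := by
    rw [h.aeval_minpoly]; exact root_R hroot
  have hS0 : aeval (1 / θ) (minpoly ℚ pb.gen) = 0 := by
    rw [h.aeval_minpoly]; exact root_S hroot
  let R0 : K →ₐ[ℚ] K := pb.lift ((θ + 1) / (2 - θ)) hR0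
  let S0 : K →ₐ[ℚ] K := pb.lift (1 / θ) hS0
  let R : K ≃ₐ[ℚ] K := AlgEquiv.ofBijective R0 R0.bijective
  let S : K ≃ₐ[ℚ] K := AlgEquiv.ofBijective S0 S0.bijective
  have hRθ : R θ = (θ + 1) / (2 - θ) := pb.lift_gen _ hR0
  have hSθ : S θ = 1 / θ := pb.lift_gen _ hS0
  have hext : ∀ f g : K ≃ₐ[ℚ] K, f θ = g θ → f = g := by
    intro f g hfg
    have : (f : K →ₐ[ℚ] K) = g := pb.algHom_ext hfg
    ext x
    exact DFunLike.congr_fun this x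
  have hRmo : ∀ i : ZMod 6, R (mo θ (.r i)) = mo θ (.r (i + 1)) := by
    intro i
    have := map_mo (R : K →+* K) θ (.r i)
    have h2 : R (mo θ (.r i)) = mo (R θ) (.r i) := this
    rw [h2, hRθ, mo_R hgen]
  have hSmo : ∀ i : ZMod 6, S (mo θ (.r i)) = mo θ (.sr i) := by
    intro i
    have := map_mo (S : K →+* K) θ (.r i)
    have h2 : S (mo θ (.r i)) = mo (S θ) (.r i) := this
    rw [h2, hSθ, mo_S hgen]
  have hRpow : ∀ m : ℕ, (R ^ m) θ = mo θ (.r (m : ZMod 6)) := by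
    intro m
    induction m with
    | zero => simp [mo]
    | succ m ih => rw [pow_succ', AlgEquiv.mul_apply, ih, hRmo]; push_cast; rfl
  have hR6 : R ^ 6 = 1 := by
    apply hext
    rw [hRpow]; rfl
  have hS2 : S * S = 1 := by
    apply hext
    rw [AlgEquiv.mul_apply, hSθ, map_div₀, map_one, hSθ]; simp
  have hSR : S * R * S = R⁻¹ := by
    rw [eq_inv_iff_mul_eq_one]
    apply hext
    have hSR1 : ∀ x y : K, S (x / y) = S x / S y := fun x y => map_div₀ S x y
    rw [AlgEquiv.mul_apply, AlgEquiv.mul_apply, AlgEquiv.mul_apply, hRθ]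
    simp only [map_div₀, map_add, map_sub, map_one, map_ofNat, hSθ, hRθ]
    obtain ⟨g1, g2, g3, g4⟩ := hgen.neg
    obtain ⟨h0, h1, h2, h3, h4⟩ := hgen
    have e0 : (1 / θ + 1) / (2 - 1 / θ) = (1 + θ) / (2 * θ - 1) := by
      rw [show 1 / θ + 1 = (1 + θ) / θ by field_simp, show 2 - 1 / θ = (2 * θ - 1) / θ by field_simp]
      field_simp
    have e1 : 1 / ((1 + θ) / (2 * θ - 1)) + 1 = 3 * θ / (1 + θ) := by field_simp; ring
    have e2 : 2 - 1 / ((1 + θ) / (2 * θ - 1)) = 3 / (1 + θ) := by field_simp; ring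
    rw [e0, e1, e2, AlgEquiv.one_apply]
    field_simp
  obtain ⟨f, hfr, hfs⟩ := dihedral_lift R S hR6 hS2 hSR
  have hf : ∀ d, f d θ = mo θ d := by
    rintro (i | i)
    · rw [hfr, hRpow]; simp
    · rw [hfs, AlgEquiv.mul_apply, hRpow, ZMod.natCast_val, ZMod.cast_id, hSmo]
  have hinj : Function.Injective f := by
    rw [injective_iff_map_eq_one]
    intro d hd
    by_contra hne
    have h1 := hf d
    rw [hd, AlgEquiv.one_apply] at h1
    obtain ⟨p, hp0, hpd, hpz⟩ := mo_coinc hgen hne h1.symm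
    have hp0' : p.map (Int.castRingHom ℚ) ≠ 0 := by
      rwa [Ne, Polynomial.map_eq_zero_iff (RingHom.injective_int _)]
    have hz' : aeval θ (p.map (Int.castRingHom ℚ)) = 0 := by
      rw [← hpz]; exact aeval_map_algebraMap ℚ θ p
    have h2 := natDegree_le_of_dvd (minpoly.dvd ℚ θ hz') hp0'
    rw [h, (gpoly_monic k).natDegree_map, gpoly_natDegree] at h2
    have h3 := natDegree_map_le (f := Int.castRingHom ℚ) (p := p)
    omega
  have hcard : Nat.card (K ≃ₐ[ℚ] K) = 12 := by
    apply le_antisymm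
    · rw [← h.finrank, Nat.card_congr (algEquivEquivAlgHom ℚ K).toEquiv]
      exact card_algHom_le_finrank ℚ K K
    · have := Nat.card_le_card_of_injective f hinj
      rwa [DihedralGroup.nat_card] at this
  have hgal : IsGalois ℚ K := IsGalois.of_card_aut_eq_finrank _ _ (by rw [hcard, h.finrank])
  have hbij : Function.Bijective f := by
    rw [Nat.bijective_iff_injective_and_card]
    exact ⟨hinj, by rw [hcard, DihedralGroup.nat_card]⟩
  exact ⟨MulEquiv.ofBijective f hbij, hf, hgal⟩

end galois


open Polynomial NumberField

section tables

/-- the unit attached to `t` -/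
def uu {F : Type*} [Field F] (t : F) : F := (t + 1) ^ 2 / (3 * t)

/-- signs of `mo (-2) d + 2` -/
def sX : DihedralGroup 6 → ℤ
  | .r _ => 1
  | .sr i => (![1, 1, 1, 1, 1, -1] : Fin 6 → ℤ) i

/-- signs of `uu (mo (-2) d)` -/
def sY : DihedralGroup 6 → ℤ
  | .r i => (![-1, -1, 1, 1, 1, 1] : Fin 6 → ℤ) i
  | .sr i => (![-1, 1, 1, 1, 1, -1] : Fin 6 → ℤ) i

/-- exponents of `mo (-2) d + 2` -/
def vX : DihedralGroup 6 → Fin 6 → ℤ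
  | .r i => (![![0, 0, 0, 0, 0, 0], ![-2, 0, 0, 1, 0, 0], ![0, -1, 0, 1, 0, 0], ![1, 0, -1, 1, 0, 0],
      ![-1, 0, 0, 1, 0, 0], ![0, 0, 0, 1, 0, 0]] : Fin 6 → Fin 6 → ℤ) i
  | .sr i => (![![-1, 1, 0, 0, 0, 0], ![0, 0, -1, 0, 1, 0], ![3, -1, 0, 0, 0, 0], ![-2, 0, 0, 0, 0, 1],
      ![0, 0, 1, 0, 0, 0], ![1, 0, 0, 0, 0, 0]] : Fin 6 → Fin 6 → ℤ) i

/-- exponents of `uu (mo (-2) d)` -/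
def vY : DihedralGroup 6 → Fin 6 → ℤ
  | .r i => (![![-1, -1, 0, 0, 0, 0], ![-2, 1, 0, 0, 0, 0], ![4, -2, 0, 0, 0, 0], ![-2, 3, -1, 0, 0, 0],
      ![-1, -2, 2, 0, 0, 0], ![2, 1, -1, 0, 0, 0]] : Fin 6 → Fin 6 → ℤ) i
  | .sr i => (![![-1, -1, 0, 0, 0, 0], ![2, 1, -1, 0, 0, 0], ![-1, -2, 2, 0, 0, 0], ![-2, 3, -1, 0, 0, 0],
      ![4, -2, 0, 0, 0, 0], ![-2, 1, 0, 0, 0, 0]] : Fin 6 → Fin 6 → ℤ) i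

lemma sX_sq (d) : sX d ^ 2 = 1 := by rcases d with i | i <;> fin_cases i <;> rfl
lemma sY_sq (d) : sY d ^ 2 = 1 := by rcases d with i | i <;> fin_cases i <;> rfl

/-- numerators and denominators at `-2` -/
def nd : DihedralGroup 6 → ℤ × ℤ
  | .r i => (![(-2, 1), (-1, 4), (1, 3), (4, 5), (-3, -2), (-5, -1)] : Fin 6 → ℤ × ℤ) i
  | .sr i => (![(1, -2), (-1, -5), (-2, -3), (-5, -4), (3, 1), (4, -1)] : Fin 6 → ℤ × ℤ) i

lemma mo_nd {F : Type*} [Field F] (d) : mo (-2 : F) d = ((nd d).1 : F) / ((nd d).2 : F) := by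
  rcases d with i | i <;> fin_cases i <;> simp [mo, nd] <;> norm_num

lemma nd_ne {F : Type*} [Field F] (h : ∀ r, ((rho r : ℕ) : F) ≠ 0) (d) : ((nd d).2 : F) ≠ 0 ∧ (3 * (nd d).1 : F) ≠ 0 := by
  have h2 : (2 : F) ≠ 0 := by simpa [rho] using h 0
  have h3 : (3 : F) ≠ 0 := by simpa [rho] using h 1
  have h5 : (5 : F) ≠ 0 := by simpa [rho] using h 2
  have h4 : (4 : F) ≠ 0 := by rw [show (4 : F) = 2 * 2 by norm_num]; exact mul_ne_zero h2 h2
  rcases d with i | i <;> fin_cases i <;> simp [nd, h2, h3, h4, h5]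

lemma prod_rho {F : Type*} [Field F] (v : Fin 6 → ℤ) : ∏ r, ((rho r : ℕ) : F) ^ v r =
    2 ^ v 0 * 3 ^ v 1 * 5 ^ v 2 * 7 ^ v 3 * 11 ^ v 4 * 13 ^ v 5 := by
  rw [Fin.prod_univ_six]; simp [rho]

lemma Xval {F : Type*} [Field F] (h : ∀ r, ((rho r : ℕ) : F) ≠ 0) {d : DihedralGroup 6} (hd : d ≠ 1) :
    mo (-2 : F) d + 2 = (sX d : F) * ∏ r, ((rho r : ℕ) : F) ^ vX d r := by
  have h2 : (2 : F) ≠ 0 := by simpa [rho] using h 0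
  have h3 : (3 : F) ≠ 0 := by simpa [rho] using h 1
  have h5 : (5 : F) ≠ 0 := by simpa [rho] using h 2
  have h4 : (4 : F) ≠ 0 := by rw [show (4 : F) = 2 * 2 by norm_num]; exact mul_ne_zero h2 h2
  rw [mo_nd, prod_rho]
  rcases d with i | i <;> fin_cases i
  · exact absurd rfl hd
  all_goals
    simp [nd, vX, sX, zpow_neg, zpow_ofNat]
    try field_simp
    try norm_num

lemma Yval {F : Type*} [Field F] (h : ∀ r, ((rho r : ℕ) : F) ≠ 0) (d : DihedralGroup 6) :
    uu (mo (-2 : F) d) = (sY d : F) * ∏ r, ((rho r : ℕ) : F) ^ vY d r := by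
  have h2 : (2 : F) ≠ 0 := by simpa [rho] using h 0
  have h3 : (3 : F) ≠ 0 := by simpa [rho] using h 1
  have h5 : (5 : F) ≠ 0 := by simpa [rho] using h 2
  have h4 : (4 : F) ≠ 0 := by rw [show (4 : F) = 2 * 2 by norm_num]; exact mul_ne_zero h2 h2
  rw [mo_nd, prod_rho]
  rcases d with i | i <;> fin_cases i
  all_goals
    simp [nd, vY, sY, uu, zpow_neg, zpow_ofNat]
    try field_simp
    try norm_num

end tables


open Polynomial NumberField

section detect

lemma detect_general {ι : Type*} [Fintype ι] {T : Set ℕ} {p : ℕ} (hp : Odd p) (hT : Detects T p)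
    (a : ι → ℤ) (v : ι → Fin 6 → ℤ) (s : ι → ℤ) (hs : ∀ i, s i ^ 2 = 1)
    (H : ∀ q ∈ T, ∀ _ : Fact q.Prime, 13 < q → ∃ β : ZMod q,
      β ^ p = ∏ i, ((s i : ZMod q) * ∏ r, ((rho r : ℕ) : ZMod q) ^ (v i r)) ^ (a i)) :
    ∀ r, (p : ℤ) ∣ ∑ i, a i * v i r := by
  refine hT (fun r => ∑ i, a i * v i r) ?_
  intro q hq hF h13
  obtain ⟨β, hβ⟩ := H q hq hF h13
  have hne : ∀ r, ((rho r : ℕ) : ZMod q) ≠ 0 := by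
    intro r h
    rw [ZMod.natCast_eq_zero_iff] at h
    have := Nat.le_of_dvd (rho_prime r).pos h
    have := rho_le r
    omega
  set S : ZMod q := ∏ i, (s i : ZMod q) ^ (a i) with hS
  have hS2 : S ^ 2 = 1 := by
    rw [hS, ← Finset.prod_pow]
    refine Finset.prod_eq_one fun i _ => ?_
    rw [← zpow_natCast, ← zpow_mul, mul_comm, zpow_mul]
    have : (s i : ZMod q) ^ ((2 : ℕ) : ℤ) = 1 := by
      rw [zpow_natCast]; exact_mod_cast congrArg (Int.cast : ℤ → ZMod q) (hs i)
    rw [this, one_zpow]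
  have hSp : S ^ p = S := by
    obtain ⟨m, rfl⟩ := hp
    rw [pow_add, pow_mul, hS2]; simp
  refine ⟨S * β, ?_⟩
  rw [mul_pow, hSp, hβ]
  simp only [mul_zpow, Finset.prod_mul_distrib]
  rw [← hS, ← mul_assoc, ← sq, hS2, one_mul]
  simp only [← Finset.prod_zpow]
  rw [Finset.prod_comm]
  refine Finset.prod_congr rfl fun r _ => ?_
  have : ∀ t : Finset ι, ∏ i ∈ t, (((rho r : ℕ) : ZMod q) ^ v i r) ^ a i =
      ((rho r : ℕ) : ZMod q) ^ (∑ i ∈ t, a i * v i r) := by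
    classical
    intro t
    induction t using Finset.induction_on with
    | empty => simp
    | insert i t hi ih =>
      rw [Finset.prod_insert hi, Finset.sum_insert hi, ih, zpow_add₀ (hne r), ← zpow_mul, mul_comm (v i r)]
  exact this _

end detect

section red

variable {q : ℕ} [Fact q.Prime]

/-- `z` is a `q`-adic integer with residue `a` -/
def Red (z : ℚ_[q]) (a : ZMod q) : Prop := ∃ w : ℤ_[q], (w : ℚ_[q]) = z ∧ PadicInt.toZMod w = a

lemma Red.add {z z' : ℚ_[q]} {a a'} (h : Red z a) (h' : Red z' a') : Red (z + z') (a + a') := by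
  obtain ⟨w, rfl, rfl⟩ := h
  obtain ⟨w', rfl, rfl⟩ := h'
  exact ⟨w + w', by simp, by simp⟩

lemma Red.sub {z z' : ℚ_[q]} {a a'} (h : Red z a) (h' : Red z' a') : Red (z - z') (a - a') := by
  obtain ⟨w, rfl, rfl⟩ := h
  obtain ⟨w', rfl, rfl⟩ := h'
  exact ⟨w - w', by simp, by simp⟩

lemma Red.mul {z z' : ℚ_[q]} {a a'} (h : Red z a) (h' : Red z' a') : Red (z * z') (a * a') := by
  obtain ⟨w, rfl, rfl⟩ := h
  obtain ⟨w', rfl, rfl⟩ := h'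
  exact ⟨w * w', by simp, by simp⟩

lemma Red.pow {z : ℚ_[q]} {a} (h : Red z a) (m : ℕ) : Red (z ^ m) (a ^ m) := by
  obtain ⟨w, rfl, rfl⟩ := h
  exact ⟨w ^ m, by simp, by simp⟩

lemma Red.nat (m : ℕ) : Red (m : ℚ_[q]) m := ⟨m, by simp, by simp⟩
lemma Red.one : Red (1 : ℚ_[q]) 1 := ⟨1, by simp, by simp⟩
lemma Red.two : Red (2 : ℚ_[q]) 2 := by simpa using Red.nat (q := q) 2
lemma Red.three : Red (3 : ℚ_[q]) 3 := by simpa using Red.nat (q := q) 3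

lemma Red.inv {z : ℚ_[q]} {a} (h : Red z a) (ha : a ≠ 0) : Red z⁻¹ a⁻¹ := by
  obtain ⟨w, rfl, rfl⟩ := h
  have h1 : ‖w‖ = 1 := by
    refine le_antisymm (PadicInt.norm_le_one _) ?_
    by_contra hlt
    push Not at hlt
    exact ha ((toZMod_eq_zero_iff w).mpr hlt)
  refine ⟨w.inv, ?_, ?_⟩
  · have := congrArg (fun t : ℤ_[q] => (t : ℚ_[q])) (PadicInt.mul_inv h1)
    simp only [PadicInt.coe_mul, PadicInt.coe_one] at this
    exact eq_inv_of_mul_eq_one_right this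
  · have := congrArg PadicInt.toZMod (PadicInt.mul_inv h1)
    rw [map_mul, map_one] at this
    exact eq_inv_of_mul_eq_one_right this

lemma Red.div {z z' : ℚ_[q]} {a a'} (h : Red z a) (h' : Red z' a') (ha : a' ≠ 0) :
    Red (z / z') (a / a') := by
  rw [div_eq_mul_inv, div_eq_mul_inv]; exact h.mul (h'.inv ha)

lemma Red.zpow {z : ℚ_[q]} {a} (h : Red z a) (ha : a ≠ 0) (m : ℤ) : Red (z ^ m) (a ^ m) := by
  obtain ⟨m, rfl | rfl⟩ := m.eq_nat_or_neg
  · simpa using h.pow m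
  · simpa using (h.pow m).inv (pow_ne_zero _ ha)

lemma Red.prod {ι : Type*} (s : Finset ι) {z : ι → ℚ_[q]} {a : ι → ZMod q} (h : ∀ i ∈ s, Red (z i) (a i)) :
    Red (∏ i ∈ s, z i) (∏ i ∈ s, a i) := by
  classical
  induction s using Finset.induction_on with
  | empty => simpa using Red.one
  | insert i s hi ih =>
    rw [Finset.prod_insert hi, Finset.prod_insert hi]
    exact (h i (by simp)).mul (ih fun j hj => h j (by simp [hj]))

lemma Red.root {z α : ℚ_[q]} {a} (h : Red z a) {p : ℕ} (hp : p ≠ 0) (e : α ^ p = z) :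
    ∃ β : ZMod q, β ^ p = a := by
  obtain ⟨w, hw, rfl⟩ := h
  have h1 : ‖α‖ ≤ 1 := by
    by_contra hlt
    push Not at hlt
    have h2 : 1 < ‖α‖ ^ p := one_lt_pow₀ hlt hp
    rw [← norm_pow, e, ← hw] at h2
    exact absurd (PadicInt.norm_le_one w) (not_le.mpr h2)
  obtain ⟨w', hw'⟩ : ∃ w' : ℤ_[q], (w' : ℚ_[q]) = α := ⟨⟨α, h1⟩, rfl⟩
  refine ⟨PadicInt.toZMod w', ?_⟩
  rw [← map_pow]
  congr 1
  apply Subtype.ext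
  have h3 : ((w' ^ p : ℤ_[q]) : ℚ_[q]) = w := by rw [PadicInt.coe_pow, hw', e, hw]
  exact h3

lemma Red.mo {τ : ℚ_[q]} (h : Red τ (-2)) (hr : ∀ r, ((rho r : ℕ) : ZMod q) ≠ 0) (d : DihedralGroup 6) :
    Red (mo τ d) (mo (-2) d) := by
  have h2 : (2 : ZMod q) ≠ 0 := by simpa [rho] using hr 0
  have h3 : (3 : ZMod q) ≠ 0 := by simpa [rho] using hr 1
  have h5 : (5 : ZMod q) ≠ 0 := by simpa [rho] using hr 2
  have h4 : (4 : ZMod q) ≠ 0 := by rw [show (4 : ZMod q) = 2 * 2 by norm_num]; exact mul_ne_zero h2 h2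
  have n2 := Red.two (q := q)
  have n1 := Red.one (q := q)
  rcases d with i | i <;> fin_cases i
  · exact h
  · refine (h.add n1).div (n2.sub h) ?_
    norm_num [h4]
  · refine (n1).div (n1.sub h) ?_
    norm_num [h3]
  · refine (n2.sub h).div (n1.sub (n2.mul h)) ?_
    norm_num [h5]
  · refine (h.sub n1).div h ?_
    norm_num [h2]
  · refine ((n2.mul h).sub n1).div (h.add n1) ?_
    norm_num
  · refine (n1).div (h) ?_
    norm_num [h2]
  · refine (n1.add h).div ((n2.mul h).sub n1) ?_
    norm_num [h5]
  · refine (h).div (h.sub n1) ?_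
    norm_num [h3]
  · refine ((n2.mul h).sub n1).div (h.sub n2) ?_
    norm_num [h4]
  · exact n1.sub h
  · refine (n2.sub h).div (n1.add h) ?_
    norm_num

end red


open Polynomial NumberField

section prods

lemma prod_dihedral {M : Type*} [CommMonoid M] (f : DihedralGroup 6 → M) :
    ∏ d, f d = (∏ i : Fin 6, f (.r i)) * ∏ i : Fin 6, f (.sr i) := by
  let e : Fin 6 ⊕ Fin 6 ≃ DihedralGroup 6 :=
    { toFun := Sum.elim (fun i => .r i) (fun i => .sr i)
      invFun := fun d => match d with
        | .r i => Sum.inl i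
        | .sr i => Sum.inr i
      left_inv := by rintro (i | i) <;> rfl
      right_inv := by rintro (i | i) <;> rfl }
  rw [← Equiv.prod_comp e, Fintype.prod_sum_type]
  rfl

lemma sum_dihedral {M : Type*} [AddCommMonoid M] (f : DihedralGroup 6 → M) :
    ∑ d, f d = (∑ i : Fin 6, f (.r i)) + ∑ i : Fin 6, f (.sr i) :=
  prod_dihedral (M := Multiplicative M) f

variable {F : Type*} [Field F] [CharZero F]

lemma prod_X {k : ℤ} {t : F} (h : aeval t (gpoly k) = 0) :
    ∏ d, (mo t d + 2) = 7 ^ 6 + 388800 * (k : F) := by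
  have hg := gen_of_root h
  obtain ⟨g1, g2, g3, g4⟩ := hg.neg
  obtain ⟨h0, h1, h2, h3, h4⟩ := hg
  have h5 : t * 2 - 1 ≠ 0 := by rwa [mul_comm]
  have h6 : 1 - t * 2 ≠ 0 := by rwa [mul_comm]
  rw [aeval_gpoly] at h
  rw [prod_dihedral, Fin.prod_univ_six, Fin.prod_univ_six]
  change (t + 2) * ((t + 1) / (2 - t) + 2) * (1 / (1 - t) + 2) * ((2 - t) / (1 - 2 * t) + 2) *
    ((t - 1) / t + 2) * ((2 * t - 1) / (t + 1) + 2) *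
    ((1 / t + 2) * ((1 + t) / (2 * t - 1) + 2) * (t / (t - 1) + 2) * ((2 * t - 1) / (t - 2) + 2) *
      (1 - t + 2) * ((2 - t) / (1 + t) + 2)) = _
  rw [show (t + 1) / (2 - t) + 2 = (t - 5) / (t - 2) by field_simp; ring,
    show 1 / (1 - t) + 2 = (2 * t - 3) / (t - 1) by field_simp; ring,
    show (2 - t) / (1 - 2 * t) + 2 = (5 * t - 4) / (2 * t - 1) by field_simp; ring,
    show (t - 1) / t + 2 = (3 * t - 1) / t by field_simp; ring,
    show (2 * t - 1) / (t + 1) + 2 = (4 * t + 1) / (t + 1) by field_simp; ring,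
    show 1 / t + 2 = (2 * t + 1) / t by field_simp; ring,
    show (1 + t) / (2 * t - 1) + 2 = (5 * t - 1) / (2 * t - 1) by field_simp; ring,
    show t / (t - 1) + 2 = (3 * t - 2) / (t - 1) by field_simp; ring,
    show (2 * t - 1) / (t - 2) + 2 = (4 * t - 5) / (t - 2) by field_simp; ring,
    show (2 - t) / (1 + t) + 2 = (t + 4) / (t + 1) by rw [add_comm 1 t]; field_simp; ring]
  field_simp
  linear_combination (-14400) * h

lemma prod_U {t : F} (hg : Gen t) :
    ∏ i : Fin 6, uu (mo t (.r i)) = 1 := by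
  obtain ⟨g1, g2, g3, g4⟩ := hg.neg
  obtain ⟨h0, h1, h2, h3, h4⟩ := hg
  have h5 : t * 2 - 1 ≠ 0 := by rwa [mul_comm]
  have h6 : 1 - t * 2 ≠ 0 := by rwa [mul_comm]
  rw [Fin.prod_univ_six]
  change (t + 1) ^ 2 / (3 * t) * (((t + 1) / (2 - t) + 1) ^ 2 / (3 * ((t + 1) / (2 - t)))) *
    ((1 / (1 - t) + 1) ^ 2 / (3 * (1 / (1 - t)))) *
    (((2 - t) / (1 - 2 * t) + 1) ^ 2 / (3 * ((2 - t) / (1 - 2 * t)))) *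
    (((t - 1) / t + 1) ^ 2 / (3 * ((t - 1) / t))) *
    (((2 * t - 1) / (t + 1) + 1) ^ 2 / (3 * ((2 * t - 1) / (t + 1)))) = 1
  rw [show (t + 1) / (2 - t) + 1 = 3 / (2 - t) by field_simp; ring,
    show 1 / (1 - t) + 1 = (2 - t) / (1 - t) by field_simp; ring,
    show (2 - t) / (1 - 2 * t) + 1 = 3 * (1 - t) / (1 - 2 * t) by field_simp; ring,
    show (t - 1) / t + 1 = (2 * t - 1) / t by field_simp; ring,
    show (2 * t - 1) / (t + 1) + 1 = 3 * t / (t + 1) by field_simp; ring]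
  rw [show t - 1 = -(1 - t) by ring, show 2 * t - 1 = -(1 - 2 * t) by ring]
  field_simp

lemma U_eq {k : ℤ} {t : F} (h : aeval t (gpoly k) = 0) :
    (uu t - 1) ^ 6 + k * uu t * (3 * uu t - 4) * (2 * uu t - 3) ^ 2 = 0 := by
  have h0 := (gen_of_root h).1
  rw [aeval_gpoly] at h
  unfold uu
  field_simp
  linear_combination h

end prods

section place2

lemma gpoly_eval (k : ℤ) : (gpoly k).eval (-2) = 7 ^ 6 + 388800 * k := by
  simp [gpoly]; ring

lemma gpoly_deriv_eval (k : ℤ) :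
    60 * (derivative (gpoly k)).eval (-2) = 7 ^ 5 * 286 - 298 * (7 ^ 6 + 388800 * k) := by
  simp [gpoly, derivative_pow]; ring

lemma rho_ne {q : ℕ} [Fact q.Prime] (h13 : 13 < q) (r : Fin 6) : ((rho r : ℕ) : ZMod q) ≠ 0 := by
  intro h
  rw [ZMod.natCast_eq_zero_iff] at h
  have := Nat.le_of_dvd (rho_prime r).pos h
  have := rho_le r
  omega

variable {K : Type*} [Field K] [NumberField K]

lemma exists_place {pb : PowerBasis ℚ K} {k : ℤ} (h : IsGoodGen pb k) {n y : ℕ} (hn : n ≠ 0)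
    (hy : (y : ℤ) ^ n = 7 ^ 6 + 388800 * k) {q : ℕ} [Fact q.Prime] (hq : q ∣ y) (h13 : 13 < q) :
    ∃ σ : K →+* ℚ_[q], Red (σ pb.gen) (-2) := by
  have hr := rho_ne h13
  have hy0 : ((7 ^ 6 + 388800 * k : ℤ) : ZMod q) = 0 := by
    rw [← hy]; push_cast
    rw [(ZMod.natCast_eq_zero_iff _ _).mpr hq, zero_pow hn]
  obtain ⟨z, hz, hz2⟩ := hensel_simple (q := q) (gpoly k) (-2)
    (by rw [gpoly_eval, hy0])
    (by
      intro h0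
      have h1 := congrArg (Int.cast : ℤ → ZMod q) (gpoly_deriv_eval k)
      rw [Int.cast_mul, h0, Int.cast_sub, Int.cast_mul 298, hy0] at h1
      have h2 : (2 : ZMod q) ≠ 0 := by simpa [rho] using hr 0
      have h7 : (7 : ZMod q) ≠ 0 := by simpa [rho] using hr 3
      have h11 : (11 : ZMod q) ≠ 0 := by simpa [rho] using hr 4
      have h13 : (13 : ZMod q) ≠ 0 := by simpa [rho] using hr 5
      have h3 : (7 : ZMod q) ^ 5 * (2 * 11 * 13) = 0 := by
        push_cast at h1
        linear_combination -h1
      simp [h2, h7, h11, h13] at h3)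
  have hz' : aeval (z : ℚ_[q]) (minpoly ℚ pb.gen) = 0 := by
    rw [h.aeval_minpoly]
    have := aeval_algebraMap_apply (R := ℤ) ℚ_[q] z (gpoly k)
    rw [hz, map_zero] at this
    exact this
  refine ⟨(pb.lift (z : ℚ_[q]) hz' : K →ₐ[ℚ] ℚ_[q]), z, ?_, ?_⟩
  · exact (pb.lift_gen _ hz').symm
  · rw [hz2]; simp

/-- the standing data -/
structure Data (pb : PowerBasis ℚ K) (k : ℤ) (n y p : ℕ) : Prop where
  good : IsGoodGen pb k
  hn : n ≠ 0
  hy : (y : ℤ) ^ n = 7 ^ 6 + 388800 * k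
  hp : p.Prime
  hp5 : 5 ≤ p
  hpn : p ∣ n
  det : Detects {q | q.Prime ∧ q ∣ y} p

lemma mo_ne {k : ℤ} {t : K} (h : aeval t (gpoly k) = 0) (d : DihedralGroup 6) :
    mo t d ≠ 0 ∧ mo t d + 1 ≠ 0 := by
  have hg := gen_of_root h
  obtain ⟨g1, g2, g3, g4⟩ := hg.neg
  obtain ⟨h0, h1, h2, h3, h4⟩ := hg
  rcases d with i | i <;> fin_cases i
  · exact ⟨h0, h2⟩
  · change (t + 1) / (2 - t) ≠ 0 ∧ (t + 1) / (2 - t) + 1 ≠ 0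
    refine ⟨div_ne_zero h2 g3, ?_⟩
    rw [show (t + 1) / (2 - t) + 1 = 3 / (2 - t) by field_simp; ring]
    exact div_ne_zero (by norm_num) g3
  · change 1 / (1 - t) ≠ 0 ∧ 1 / (1 - t) + 1 ≠ 0
    refine ⟨div_ne_zero one_ne_zero g1, ?_⟩
    rw [show 1 / (1 - t) + 1 = (2 - t) / (1 - t) by field_simp; ring]
    exact div_ne_zero g3 g1
  · change (2 - t) / (1 - 2 * t) ≠ 0 ∧ (2 - t) / (1 - 2 * t) + 1 ≠ 0
    refine ⟨div_ne_zero g3 g4, ?_⟩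
    rw [div_add_one g4]
    refine div_ne_zero ?_ g4
    rw [show 2 - t + (1 - 2 * t) = 3 * (1 - t) by ring]
    exact mul_ne_zero (by norm_num) g1
  · change (t - 1) / t ≠ 0 ∧ (t - 1) / t + 1 ≠ 0
    refine ⟨div_ne_zero h1 h0, ?_⟩
    rw [div_add_one h0]
    refine div_ne_zero ?_ h0
    rwa [show t - 1 + t = 2 * t - 1 by ring]
  · change (2 * t - 1) / (t + 1) ≠ 0 ∧ (2 * t - 1) / (t + 1) + 1 ≠ 0
    refine ⟨div_ne_zero h4 h2, ?_⟩
    rw [div_add_one h2]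
    refine div_ne_zero ?_ h2
    rw [show 2 * t - 1 + (t + 1) = 3 * t by ring]
    exact mul_ne_zero (by norm_num) h0
  · change 1 / t ≠ 0 ∧ 1 / t + 1 ≠ 0
    refine ⟨div_ne_zero one_ne_zero h0, ?_⟩
    rw [div_add_one h0]
    exact div_ne_zero g2 h0
  · change (1 + t) / (2 * t - 1) ≠ 0 ∧ (1 + t) / (2 * t - 1) + 1 ≠ 0
    refine ⟨div_ne_zero g2 h4, ?_⟩
    rw [div_add_one h4]
    refine div_ne_zero ?_ h4
    rw [show 1 + t + (2 * t - 1) = 3 * t by ring]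
    exact mul_ne_zero (by norm_num) h0
  · change t / (t - 1) ≠ 0 ∧ t / (t - 1) + 1 ≠ 0
    refine ⟨div_ne_zero h0 h1, ?_⟩
    rw [div_add_one h1]
    refine div_ne_zero ?_ h1
    rwa [show t + (t - 1) = 2 * t - 1 by ring]
  · change (2 * t - 1) / (t - 2) ≠ 0 ∧ (2 * t - 1) / (t - 2) + 1 ≠ 0
    refine ⟨div_ne_zero h4 h3, ?_⟩
    rw [div_add_one h3]
    refine div_ne_zero ?_ h3
    rw [show 2 * t - 1 + (t - 2) = 3 * (t - 1) by ring]
    exact mul_ne_zero (by norm_num) h1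
  · change 1 - t ≠ 0 ∧ 1 - t + 1 ≠ 0
    refine ⟨g1, ?_⟩
    rwa [show 1 - t + 1 = 2 - t by ring]
  · change (2 - t) / (1 + t) ≠ 0 ∧ (2 - t) / (1 + t) + 1 ≠ 0
    refine ⟨div_ne_zero g3 g2, ?_⟩
    rw [div_add_one g2]
    refine div_ne_zero ?_ g2
    rw [show 2 - t + (1 + t) = 3 by ring]
    norm_num

lemma map_uu {F F' : Type*} [Field F] [Field F'] (f : F →+* F') (t : F) : f (uu t) = uu (f t) := by
  simp [uu, map_ofNat]

lemma Data.local_rel {pb : PowerBasis ℚ K} {k : ℤ} {n y p : ℕ} (D : Data pb k n y p)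
    (c e : DihedralGroup 6 → ℤ) (α : K)
    (hα : α ^ p = (∏ d, (mo pb.gen d + 2) ^ (c d)) * ∏ d, uu (mo pb.gen d) ^ (e d)) (r : Fin 6) :
    (p : ℤ) ∣ (∑ d, (c d - c 1) * vX d r) + ∑ d, e d * vY d r := by
  set θ := pb.gen with hθ
  have hroot := D.good.root
  have hN : ∏ d, (mo θ d + 2) = (y : K) ^ n := by
    rw [prod_X hroot]; exact_mod_cast congrArg (Int.cast : ℤ → K) D.hy.symm
  have hy0 : (y : K) ^ n ≠ 0 := by
    have : (y : K) ^ n = (((y : ℤ) ^ n : ℤ) : K) := by push_cast; rfl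
    rw [this, D.hy, Int.cast_ne_zero]
    omega
  have hX0 : ∀ d, mo θ d + 2 ≠ 0 := by
    intro d h
    rw [← hN] at hy0
    exact hy0 (Finset.prod_eq_zero (Finset.mem_univ d) h)
  have hyK : (y : K) ≠ 0 := fun h => hy0 (by rw [h, zero_pow D.hn])
  obtain ⟨m, hm⟩ := D.hpn
  set α' := α * (y : K) ^ (-(m * c 1 : ℤ)) with hα'
  have h1 : α' ^ p = (∏ d, (mo θ d + 2) ^ (c d - c 1)) * ∏ d, uu (mo θ d) ^ (e d) := by
    have h2 : ∏ d, (mo θ d + 2) ^ (c d - c 1) = (∏ d, (mo θ d + 2) ^ (c d)) * ((y : K) ^ n) ^ (- c 1) := by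
      rw [← hN, ← Finset.prod_zpow, ← Finset.prod_mul_distrib]
      refine Finset.prod_congr rfl fun d _ => ?_
      rw [← zpow_add₀ (hX0 d)]; rfl
    rw [h2, mul_right_comm, ← hα, hα', mul_pow]
    congr 1
    have h5 : ((y : K) ^ n) = (y : K) ^ (n : ℤ) := (zpow_natCast _ _).symm
    have h6 : ((y : K) ^ (-(m * c 1 : ℤ))) ^ p = ((y : K) ^ (-(m * c 1 : ℤ))) ^ (p : ℤ) :=
      (zpow_natCast _ _).symm
    rw [h5, h6, ← zpow_mul, ← zpow_mul, hm]
    congr 1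
    push_cast; ring
  have key := detect_general (ι := DihedralGroup 6 ⊕ DihedralGroup 6) (D.hp.odd_of_ne_two (by have := D.hp5; omega))
    D.det (Sum.elim (fun d => c d - c 1) e) (Sum.elim vX vY) (Sum.elim sX sY)
    (by rintro (d | d); exacts [sX_sq d, sY_sq d]) (by
      rintro q ⟨-, hq⟩ hF h13
      obtain ⟨σ, hσ⟩ := exists_place D.good D.hn D.hy hq h13
      have hr := rho_ne h13
      clear_value α'
      have h3 := congrArg σ h1
      rw [map_pow, map_mul, map_prod, map_prod] at h3
      simp only [map_zpow₀, map_add, map_uu, map_mo, map_ofNat] at h3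
      refine Red.root ?_ D.hp.ne_zero h3
      rw [Fintype.prod_sum_type]
      have hpr : ∀ v : Fin 6 → ℤ, ∏ r, ((rho r : ℕ) : ZMod q) ^ v r ≠ 0 := fun v =>
        Finset.prod_ne_zero_iff.mpr fun r _ => zpow_ne_zero _ (hr r)
      have hs : ∀ s : ℤ, s ^ 2 = 1 → (s : ZMod q) ≠ 0 := by
        intro s hs h0
        have := congrArg (Int.cast : ℤ → ZMod q) hs
        rw [Int.cast_pow, h0] at this
        simp at this
      refine Red.mul (Red.prod _ fun d _ => ?_) (Red.prod _ fun d _ => ?_)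
      · simp only [Sum.elim_inl]
        by_cases hd : d = 1
        · subst hd; simpa using Red.one
        · refine Red.zpow ?_ (mul_ne_zero (hs _ (sX_sq d)) (hpr _)) _
          rw [← Xval hr hd]
          exact (hσ.mo hr d).add Red.two
      · simp only [Sum.elim_inr]
        refine Red.zpow ?_ (mul_ne_zero (hs _ (sY_sq d)) (hpr _)) _
        rw [← Yval hr d]
        have h4 := hσ.mo hr d
        refine ((h4.add Red.one).pow 2).div (Red.three.mul h4) ?_
        rw [mo_nd, ← mul_div_assoc]
        exact div_ne_zero (nd_ne hr d).2 (nd_ne hr d).1) r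
  rw [Fintype.sum_sum_type] at key
  exact key

end place2


open Polynomial NumberField

section indep

lemma linalg {p : ℕ} (hp : p.Prime) (hp5 : 5 ≤ p) (c e : DihedralGroup 6 → ℤ)
    (H : ∀ (h : DihedralGroup 6) (r : Fin 6),
      (p : ℤ) ∣ (∑ d, (c (h * d) - c h) * vX d r) + ∑ d, e (h * d) * vY d r)
    (hes : ∀ i, e (.sr i) = 0) (he0 : e (.r 0) = 0) :
    (∀ d, (p : ℤ) ∣ c d - c 1) ∧ ∀ d, (p : ℤ) ∣ e d := by
  have := Fact.mk hp
  have h2 : (2 : ZMod p) ≠ 0 := by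
    intro h
    have h' : ((2 : ℕ) : ZMod p) = 0 := by exact_mod_cast h
    rw [ZMod.natCast_eq_zero_iff] at h'
    have := Nat.le_of_dvd (by norm_num) h'
    omega
  have h3 : (3 : ZMod p) ≠ 0 := by
    intro h
    have h' : ((3 : ℕ) : ZMod p) = 0 := by exact_mod_cast h
    rw [ZMod.natCast_eq_zero_iff] at h'
    have := Nat.le_of_dvd (by norm_num) h'
    omega
  have H' : ∀ (h : DihedralGroup 6) (r : Fin 6),
      (∑ d, ((c (h * d) : ZMod p) - c h) * (vX d r : ℤ)) + ∑ d, (e (h * d) : ZMod p) * (vY d r : ℤ) = 0 := by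
    intro h r
    have := (ZMod.intCast_zmod_eq_zero_iff_dvd _ p).mpr (H h r)
    rw [← this]
    push_cast
    rfl
  set C : DihedralGroup 6 → ZMod p := fun d => c d with hC
  set E : DihedralGroup 6 → ZMod p := fun d => e d with hE
  have A1 : ∀ h, C (h * .sr 1) = C h := by
    intro h
    have := H' h 4
    rw [sum_dihedral, sum_dihedral, Fin.sum_univ_six, Fin.sum_univ_six, Fin.sum_univ_six, Fin.sum_univ_six] at this
    simp [vX, vY] at this
    exact sub_eq_zero.mp this
  have A3 : ∀ h, C (h * .sr 3) = C h := by
    intro h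
    have := H' h 5
    rw [sum_dihedral, sum_dihedral, Fin.sum_univ_six, Fin.sum_univ_six, Fin.sum_univ_six, Fin.sum_univ_six] at this
    simp [vX, vY] at this
    exact sub_eq_zero.mp this
  have A7 : ∀ h, C (h * .r 1) + C (h * .r 2) + C (h * .r 3) + C (h * .r 4) + C (h * .r 5) = 5 * C h := by
    intro h
    have := H' h 3
    rw [sum_dihedral, sum_dihedral, Fin.sum_univ_six, Fin.sum_univ_six, Fin.sum_univ_six, Fin.sum_univ_six] at this
    simp [vX, vY] at this
    simp only [hC]
    linear_combination this
  have A2 : ∀ i, C (.r (i + 2)) = C (.r i) := by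
    intro i
    have a := A3 (.r i * .sr 1)
    rw [A1] at a
    rw [← a]
    simp only [DihedralGroup.r_mul_sr, DihedralGroup.sr_mul_sr]
    congr 2; ring
  have b1 : C (.r 2) = C (.r 0) := A2 0
  have b2 : C (.r 3) = C (.r 1) := A2 1
  have b3 : C (.r 4) = C (.r 2) := A2 2
  have b4 : C (.r 5) = C (.r 3) := A2 3
  have b5 : C (.r 1) = C (.r 0) := by
    have a := A7 (.r 0)
    simp only [DihedralGroup.r_mul_r, zero_add] at a
    rw [b4, b3, b2, b1] at a
    have : (3 : ZMod p) * (C (.r 1) - C (.r 0)) = 0 := by linear_combination a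
    exact sub_eq_zero.mp ((mul_eq_zero.mp this).resolve_left h3)
  have hr : ∀ i, C (.r i) = C 1 := by
    intro i
    rw [show (1 : DihedralGroup 6) = .r 0 from rfl]
    fin_cases i
    · rfl
    · exact b5
    · exact b1
    · exact b2.trans b5
    · exact b3.trans b1
    · exact b4.trans (b2.trans b5)
  have hsr : ∀ i, C (.sr i) = C 1 := by
    intro i
    have := A1 (.r (1 - i))
    rw [hr, DihedralGroup.r_mul_sr, sub_sub_cancel] at this
    exact this
  have Cc : ∀ d, C d = C 1 := by
    rintro (i | i)
    exacts [hr i, hsr i]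
  refine ⟨fun d => ?_, ?_⟩
  · rw [← ZMod.intCast_zmod_eq_zero_iff_dvd]; push_cast; exact sub_eq_zero.mpr (Cc d)
  have B : ∀ j, -E (.r (j + 3)) + 2 * E (.r (j + 4)) - E (.r (j + 5)) = 0 := by
    intro j
    have := H' (.r j) 2
    have hz : (∑ d, ((c (.r j * d) : ZMod p) - c (.r j)) * (vX d 2 : ℤ)) = 0 := by
      refine Finset.sum_eq_zero fun d _ => ?_
      have : (c (.r j * d) : ZMod p) - c (.r j) = 0 := by
        rw [sub_eq_zero]; exact (Cc _).trans (Cc _).symm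
      rw [this, zero_mul]
    rw [hz, zero_add, sum_dihedral, Fin.sum_univ_six, Fin.sum_univ_six] at this
    simp [vY] at this
    have t2 : -(e (.r (j + 3)) : ZMod p) + e (.r (j + 4)) * 2 + -(e (.r (j + 5)) : ZMod p) +
      (-(e (.sr (1 - j)) : ZMod p) + e (.sr (2 - j)) * 2 + -(e (.sr (3 - j)) : ZMod p)) = 0 := this
    rw [hes, hes, hes, Int.cast_zero] at t2
    simp only [hE]
    linear_combination t2
  have B0 := B 0
  have B1 := B 1
  have B2 := B 2
  have B3 := B 3
  have B4 := B 4
  have B5 := B 5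
  have E0 : E (.r 0) = 0 := by
    change ((e (.r 0) : ℤ) : ZMod p) = 0
    rw [he0, Int.cast_zero]
  change -E (.r 3) + 2 * E (.r 4) - E (.r 5) = 0 at B0
  change -E (.r 4) + 2 * E (.r 5) - E (.r 0) = 0 at B1
  change -E (.r 5) + 2 * E (.r 0) - E (.r 1) = 0 at B2
  change -E (.r 0) + 2 * E (.r 1) - E (.r 2) = 0 at B3
  change -E (.r 1) + 2 * E (.r 2) - E (.r 3) = 0 at B4
  change -E (.r 2) + 2 * E (.r 3) - E (.r 4) = 0 at B5
  have e2 : E (.r 2) = 2 * E (.r 1) := by linear_combination -B3 - E0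
  have e3 : E (.r 3) = 3 * E (.r 1) := by linear_combination -B4 + 2 * e2
  have e4 : E (.r 4) = 4 * E (.r 1) := by linear_combination -B5 + 2 * e3 - e2
  have e5 : E (.r 5) = 5 * E (.r 1) := by linear_combination -B0 + 2 * e4 - e3
  have e1 : E (.r 1) = 0 := by
    have : (2 * 3 : ZMod p) * E (.r 1) = 0 := by linear_combination -B2 + 2 * E0 - e5
    exact (mul_eq_zero.mp this).resolve_left (mul_ne_zero h2 h3)
  have hall : ∀ d, E d = 0 := by
    rintro (i | i)
    · fin_cases i
      · exact E0
      · exact e1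
      · exact e2.trans (by rw [e1, mul_zero])
      · exact e3.trans (by rw [e1, mul_zero])
      · exact e4.trans (by rw [e1, mul_zero])
      · exact e5.trans (by rw [e1, mul_zero])
    · simp [hE, hes]
  intro d
  rw [← ZMod.intCast_zmod_eq_zero_iff_dvd]; exact hall d

variable {K : Type*} [Field K] [NumberField K]

lemma Data.indep {pb : PowerBasis ℚ K} {k : ℤ} {n y p : ℕ} (D : Data pb k n y p)
    (c e : DihedralGroup 6 → ℤ) (α : K)
    (hα : α ^ p = (∏ d, (mo pb.gen d + 2) ^ (c d)) * ∏ d, uu (mo pb.gen d) ^ (e d))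
    (hes : ∀ i, e (.sr i) = 0) (he0 : e (.r 0) = 0) :
    (∀ d, (p : ℤ) ∣ c d - c 1) ∧ ∀ d, (p : ℤ) ∣ e d := by
  refine linalg D.hp D.hp5 c e (fun h r => ?_) hes he0
  obtain ⟨ρ, hρ, -⟩ := D.good.galois
  have hmo : ∀ g d, ρ g (mo pb.gen d) = mo pb.gen (g * d) := by
    intro g d
    rw [← hρ, ← hρ, map_mul]; rfl
  have hmu : ∀ (g : DihedralGroup 6) (t : K), ρ g (uu t) = uu (ρ g t) := fun g t =>
    map_uu ((ρ g : K ≃ₐ[ℚ] K) : K →+* K) t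
  have h1 := congrArg (ρ h⁻¹) hα
  rw [map_pow, map_mul, map_prod, map_prod] at h1
  simp only [map_zpow₀, map_add, map_ofNat, hmu, hmo] at h1
  have p1 := Equiv.prod_comp (Equiv.mulLeft h) (fun d => (mo pb.gen (h⁻¹ * d) + 2) ^ c d)
  have p2 := Equiv.prod_comp (Equiv.mulLeft h) (fun d => uu (mo pb.gen (h⁻¹ * d)) ^ e d)
  rw [← p1, ← p2] at h1
  simp only [Equiv.coe_mulLeft, inv_mul_cancel_left] at h1
  have := D.local_rel (fun d => c (h * d)) (fun d => e (h * d)) _ h1 r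
  simpa using this

end indep


open Polynomial NumberField

section groups

lemma rank_crit {M : Type*} [CommGroup M] {n s : ℕ} (hn : 0 < n) (g : Fin s → M) (hg : ∀ i, g i ^ n = 1)
    (H : ∀ p : ℕ, p.Prime → p ∣ n → ∀ c : Fin s → ℕ, ∏ i, g i ^ (n / p * c i) = 1 → ∀ i, p ∣ c i) :
    HasZModRankGE M n s := by
  have : NeZero n := ⟨hn.ne'⟩
  let f : Fin s → (ZMod n →+ Additive M) := fun i => ZMod.lift n
    ⟨zmultiplesHom (Additive M) (Additive.ofMul (g i)), by
      rw [zmultiplesHom_apply, natCast_zsmul, ← ofMul_pow, hg]; rfl⟩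
  have hf : ∀ i (m : ℕ), f i (m : ZMod n) = Additive.ofMul (g i ^ m) := by
    intro i m
    have h1 := ZMod.lift_coe n ⟨zmultiplesHom (Additive M) (Additive.ofMul (g i)), by
      rw [zmultiplesHom_apply, natCast_zsmul, ← ofMul_pow, hg]; rfl⟩ (m : ℤ)
    rw [Int.cast_natCast] at h1
    refine h1.trans ?_
    simp
  let F : (Fin s → ZMod n) →+ Additive M := ∑ i, (f i).comp (Pi.evalAddMonoidHom _ i)
  have hF : ∀ x, F x = ∑ i, f i (x i) := by
    intro x; simp [F]
  have hinj : Function.Injective F := by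
    rw [injective_iff_map_eq_zero]
    intro x hx
    by_contra hne
    have hfin : IsOfFinAddOrder x := isOfFinAddOrder_of_finite x
    have hord : addOrderOf x ≠ 1 := by rwa [Ne, AddMonoid.addOrderOf_eq_one_iff]
    obtain ⟨p, hp, hpd⟩ := Nat.exists_prime_and_dvd hord
    obtain ⟨N, hN⟩ := hpd
    have hnx : n • x = 0 := by
      funext i; simp
    have hdn : addOrderOf x ∣ n := addOrderOf_dvd_of_nsmul_eq_zero hnx
    have hpn : p ∣ n := (Dvd.intro N hN.symm).trans hdn
    obtain ⟨m, hm⟩ := hpn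
    have hz : p • (N • x) = 0 := by
      rw [← mul_nsmul', ← hN, addOrderOf_nsmul_eq_zero]
    have hz0 : N • x ≠ 0 := by
      intro h
      have h1 := addOrderOf_dvd_of_nsmul_eq_zero h
      have hN0 : 0 < N := by
        rcases Nat.eq_zero_or_pos N with h0 | h0
        · rw [h0, mul_zero] at hN
          exact absurd hN hfin.addOrderOf_pos.ne'
        · exact h0
      have h2 := Nat.le_of_dvd hN0 h1
      rw [hN] at h2
      nlinarith [hp.two_le]
    set z := N • x with hzdef
    have hFz : F z = 0 := by rw [hzdef, map_nsmul, hx, nsmul_zero]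
    have hm0 : 0 < m := Nat.pos_of_ne_zero (by rintro rfl; omega)
    have hnp : n / p = m := by rw [hm]; exact Nat.mul_div_cancel_left _ hp.pos
    have hzi : ∀ i, ∃ c : ℕ, z i = ((m * c : ℕ) : ZMod n) := by
      intro i
      have h1 : (p : ZMod n) * z i = 0 := by
        have := congrFun hz i
        simpa using this
      have h2 : n ∣ p * (z i).val := by
        rw [← ZMod.natCast_eq_zero_iff]; push_cast
        rw [ZMod.natCast_val, ZMod.cast_id]; exact h1
      have h2' : p * m ∣ p * (z i).val := Eq.subst (motive := fun w => w ∣ p * (z i).val) hm h2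
      obtain ⟨c, hc⟩ := Nat.dvd_of_mul_dvd_mul_left hp.pos h2'
      refine ⟨c, ?_⟩
      rw [← hc, ZMod.natCast_val, ZMod.cast_id]
    choose c hc using hzi
    have h3 : ∏ i, g i ^ (n / p * c i) = 1 := by
      rw [hF] at hFz
      simp only [hc, hf] at hFz
      rw [hnp]
      rw [← ofMul_prod] at hFz
      exact hFz
    have h4 := H p hp ⟨m, hm⟩ c h3
    apply hz0
    funext i
    rw [hc, Pi.zero_apply, ZMod.natCast_eq_zero_iff, hm, mul_comm p m]
    exact mul_dvd_mul_left m (h4 i)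
  exact ⟨AddMonoidHom.toMultiplicativeLeft F, fun a b h => hinj h⟩

lemma unit_dep {G : Type*} [CommGroup G] {p : ℕ} (hp : p.Prime) {s : ℕ} (f : Fin s → G)
    (H : ∀ x : G, ∃ ζ : G, ∃ e : Fin s → ℤ, x = ζ ^ p * ∏ i, f i ^ e i) (u : Fin (s + 1) → G) :
    ∃ e : Fin (s + 1) → ℤ, (∃ i, ¬ (p : ℤ) ∣ e i) ∧ ∃ η : G, ∏ i, u i ^ e i = η ^ p := by
  have := Fact.mk hp
  choose ζ a ha using fun i => H (u i)
  have hdep : ¬ LinearIndependent (ZMod p) (fun i (j : Fin s) => (a i j : ZMod p)) := by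
    intro h
    have := h.fintype_card_le_finrank
    simp at this
  rw [Fintype.not_linearIndependent_iff] at hdep
  obtain ⟨b, hb, i0, hi0⟩ := hdep
  refine ⟨fun i => ((b i).val : ℤ), ⟨i0, ?_⟩, ?_⟩
  · rw [← ZMod.intCast_zmod_eq_zero_iff_dvd]
    simpa using hi0
  · have hdiv : ∀ j, ∃ m : ℤ, ∑ i, ((b i).val : ℤ) * a i j = p * m := by
      intro j
      change (p : ℤ) ∣ _
      rw [← ZMod.intCast_zmod_eq_zero_iff_dvd]
      have := congrFun hb j
      simpa using this
    choose m hm using hdiv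
    refine ⟨(∏ i, ζ i ^ ((b i).val : ℤ)) * ∏ j, f j ^ m j, ?_⟩
    have e1 : ∀ i, u i ^ ((b i).val : ℤ) = (ζ i ^ ((b i).val : ℤ)) ^ p * ∏ j, f j ^ (((b i).val : ℤ) * a i j) := by
      intro i
      conv_lhs => rw [ha i]
      rw [mul_zpow, ← Finset.prod_zpow]
      congr 1
      · rw [← zpow_natCast, ← zpow_mul, ← zpow_natCast (ζ i ^ _), ← zpow_mul, mul_comm]
      · refine Finset.prod_congr rfl fun j _ => ?_
        rw [← zpow_mul, mul_comm]
    simp only [e1]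
    rw [Finset.prod_mul_distrib, mul_pow, Finset.prod_pow, Finset.prod_comm]
    congr 1
    rw [← Finset.prod_pow]
    refine Finset.prod_congr rfl fun j _ => ?_
    rw [← zpow_natCast, ← zpow_mul, mul_comm (m j), ← hm]
    have : ∀ t : Finset (Fin (s + 1)), ∏ i ∈ t, f j ^ (((b i).val : ℤ) * a i j) =
        f j ^ (∑ i ∈ t, ((b i).val : ℤ) * a i j) := by
      intro t
      induction t using Finset.induction_on with
      | empty => simp
      | insert i t hi ih => rw [Finset.prod_insert hi, Finset.sum_insert hi, ih, zpow_add]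
    exact this _

end groups


open Polynomial NumberField

section ideals

lemma cop_aux {n y : ℕ} {k D : ℤ} (hy : (y : ℤ) ^ n = 7 ^ 6 + 388800 * k) (h30 : Nat.Coprime y 30030)
    (hD : 60 * D = 7 ^ 5 * 286 - 298 * (7 ^ 6 + 388800 * k)) : IsCoprime ((y : ℤ) ^ n) D := by
  have h1 : IsCoprime ((y : ℤ) ^ n) (30030 : ℤ) := by
    refine IsCoprime.pow_left ?_
    exact_mod_cast Nat.isCoprime_iff_coprime.mpr h30
  have h2 : IsCoprime ((y : ℤ) ^ n) (7 ^ 5 * 286 : ℤ) := by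
    refine IsCoprime.of_isCoprime_of_dvd_right (h1.pow_right (n := 5)) ?_
    norm_num
  have h3 : IsCoprime ((y : ℤ) ^ n) (60 * D) := by
    rw [hD, ← hy]
    have := h2.add_mul_left_right (-298)
    rwa [show (7 ^ 5 * 286 - 298 * (y : ℤ) ^ n) = 7 ^ 5 * 286 + (y : ℤ) ^ n * (-298) by ring]
  exact h3.of_mul_right_right

lemma ideal_pow {R : Type*} [CommRing R] [IsDedekindDomain R] {t : R} {k : ℤ}
    (ht : aeval t (gpoly k) = 0) {n y : ℕ} (hy : (y : ℤ) ^ n = 7 ^ 6 + 388800 * k)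
    (h30 : Nat.Coprime y 30030) : ∃ I : Ideal R, Ideal.span {t + 2} = I ^ n := by
  have hdiv : ∀ f : ℤ[X], ∃ h : ℤ[X], f = (X + 2) * h + C (f.eval (-2)) := by
    intro f
    have : (X - C (-2)) ∣ f - C (f.eval (-2)) := by
      rw [dvd_iff_isRoot]; simp
    obtain ⟨h, hh⟩ := this
    refine ⟨h, ?_⟩
    have e : (X - C (-2) : ℤ[X]) = X + 2 := by simp
    rw [e] at hh
    linear_combination hh
  obtain ⟨h, hh⟩ := hdiv (gpoly k)
  obtain ⟨h2, hh2⟩ := hdiv h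
  have hder : (derivative (gpoly k)).eval (-2) = h.eval (-2) := by
    rw [hh]; simp
  have hD := gpoly_deriv_eval k
  rw [hder] at hD
  rw [gpoly_eval, ← hy] at hh
  set Dv := h.eval (-2) with hDv
  obtain ⟨u, v, huv⟩ := cop_aux hy h30 hD
  have e1 : (t + 2) * aeval t h + (y : R) ^ n = 0 := by
    rw [← ht, hh]; simp [map_ofNat]
  have e2 : aeval t h = (t + 2) * aeval t h2 + (Dv : R) := by
    conv_lhs => rw [hh2]
    simp [map_ofNat]
  have e3 : (u : R) * (y : R) ^ n + v * Dv = 1 := by exact_mod_cast congrArg (Int.cast : ℤ → R) huv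
  have hc : IsCoprime (t + 2) (aeval t h) := by
    refine ⟨-(u * aeval t h) - v * aeval t h2, v, ?_⟩
    linear_combination -(u : R) * e1 + e3 + v * e2
  have hmul : Ideal.span {t + 2} * Ideal.span {aeval t h} = (Ideal.span {(y : R)}) ^ n := by
    rw [Ideal.span_singleton_mul_span_singleton, Ideal.span_singleton_pow,
      Ideal.span_singleton_eq_span_singleton]
    exact ⟨-1, by simp; linear_combination -e1⟩
  classical
  exact exists_eq_pow_of_mul_eq_pow_of_coprime
    ((Ideal.isCoprime_span_singleton_iff _ _).mpr hc) hmul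

variable {K : Type*} [Field K] [NumberField K]

lemma exists_unit {k : ℤ} {U : K} (hU : (U - 1) ^ 6 + k * U * (3 * U - 4) * (2 * U - 3) ^ 2 = 0) :
    ∃ u : (𝓞 K)ˣ, ((u : 𝓞 K) : K) = U := by
  have hmon : ((X - 1) ^ 6 + C k * X * (3 * X - 4) * (2 * X - 3) ^ 2 : ℤ[X]).Monic := by
    have h1 : (X - 1 : ℤ[X]).Monic := monic_X_sub_C 1
    refine (h1.pow 6).add_of_left ?_
    have h2 : (X - 1 : ℤ[X]).natDegree = 1 := natDegree_X_sub_C 1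
    rw [degree_eq_natDegree (h1.pow 6).ne_zero, h1.natDegree_pow, h2]
    refine lt_of_le_of_lt degree_le_natDegree ?_
    have : (C k * X * (3 * X - 4) * (2 * X - 3) ^ 2 : ℤ[X]).natDegree ≤ 4 := by
      compute_degree
    exact_mod_cast (by omega : _ < 6 * 1)
  have hIntg : IsIntegral ℤ U := by
    refine ⟨_, hmon, ?_⟩
    rw [← aeval_def]
    simpa [map_ofNat] using hU
  let V : 𝓞 K := ⟨U, hIntg⟩
  have hV : (V - 1) ^ 6 + k * V * (3 * V - 4) * (2 * V - 3) ^ 2 = 0 := by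
    apply RingOfIntegers.ext
    have hVU : (algebraMap (𝓞 K) K) V = U := rfl
    simpa [map_ofNat, hVU] using hU
  refine ⟨⟨V, -(V ^ 5 - 6 * V ^ 4 + 15 * V ^ 3 - 20 * V ^ 2 + 15 * V - 6 + k * (3 * V - 4) * (2 * V - 3) ^ 2),
    by linear_combination -hV, by linear_combination -hV⟩, rfl⟩

lemma totally_complex {pb : PowerBasis ℚ K} {k : ℤ} (h : IsGoodGen pb k) (hk : 0 < k) (φ : K →+* ℂ) :
    (φ pb.gen).im ≠ 0 := by
  intro him
  have h1 : aeval (φ pb.gen) (gpoly k) = 0 := by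
    have := Polynomial.aeval_algHom_apply (φ.toIntAlgHom) pb.gen (gpoly k)
    rw [h.root, map_zero] at this
    exact this
  have h2 : φ pb.gen = (((φ pb.gen).re : ℝ) : ℂ) := by
    apply Complex.ext <;> simp [him]
  rw [h2, aeval_gpoly] at h1
  set x := (φ pb.gen).re
  have h3 : (x ^ 2 - x + 1) ^ 6 + 27 * (k : ℝ) * (x * (x - 1) * (x + 1) * (x - 2) * (2 * x - 1)) ^ 2 = 0 := by
    exact_mod_cast h1
  have h4 : 0 < x ^ 2 - x + 1 := by nlinarith [sq_nonneg (x - 1 / 2)]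
  have h5 : (0 : ℝ) < k := by exact_mod_cast hk
  have : 0 < (x ^ 2 - x + 1) ^ 6 + 27 * (k : ℝ) * (x * (x - 1) * (x + 1) * (x - 2) * (2 * x - 1)) ^ 2 := by
    positivity
  linarith

lemma unit_rank {pb : PowerBasis ℚ K} {k : ℤ} (h : IsGoodGen pb k) (hk : 0 < k) :
    Units.rank K = 5 := by
  have : IsTotallyComplex K := by
    refine ⟨fun v => ?_⟩
    by_contra hv
    rw [InfinitePlace.not_isComplex_iff_isReal] at hv
    have h1 := InfinitePlace.isReal_iff.mp hv
    have h2 := (ComplexEmbedding.isReal_iff.mp h1)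
    have h3 := RingHom.congr_fun h2 pb.gen
    rw [ComplexEmbedding.conjugate_coe_eq, Complex.conj_eq_iff_im] at h3
    exact totally_complex h hk _ h3
  have h1 := IsTotallyComplex.finrank K
  rw [h.finrank] at h1
  have h2 := InfinitePlace.card_eq_nrRealPlaces_add_nrComplexPlaces K
  rw [IsTotallyComplex.nrRealPlaces_eq_zero K] at h2
  rw [Units.rank]
  rw [h2]
  omega

lemma torsion_pow {pb : PowerBasis ℚ K} {k : ℤ} {n y p : ℕ} (D : Data pb k n y p)
    {q : ℕ} (hq : q.Prime) (hqy : q ∣ y) (hq13 : 13 < q) (hqp : (q : ZMod p) ≠ 1)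
    (ζ : (𝓞 K)ˣ) (hζ : ζ ∈ Units.torsion K) : ∃ ξ : (𝓞 K)ˣ, ζ = ξ ^ p := by
  have := Fact.mk hq
  have := Fact.mk D.hp
  have hnd : ¬ p ∣ Nat.card (Units.torsion K) := by
    intro hd
    obtain ⟨z, hz⟩ := exists_prime_orderOf_dvd_card' p hd
    have hprim : IsPrimitiveRoot (((z : (𝓞 K)ˣ) : 𝓞 K) : K) p := by
      have h1 : IsPrimitiveRoot z p := hz ▸ IsPrimitiveRoot.orderOf z
      have h2 := h1.map_of_injective (f := (Units.torsion K).subtype) Subtype.val_injective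
      have h3 := h2.map_of_injective (f := Units.coeHom (𝓞 K)) Units.val_injective
      exact h3.map_of_injective (f := algebraMap (𝓞 K) K) RingOfIntegers.coe_injective
    set w := (((z : (𝓞 K)ˣ) : 𝓞 K) : K) with hw
    have hle : p - 1 ≤ 12 := by
      have := hprim.lcm_totient_le_finrank (K := ℚ) hprim (by
        rw [Nat.lcm_self]; exact cyclotomic.irreducible_rat D.hp.pos)
      rwa [Nat.lcm_self, Nat.totient_prime D.hp, D.good.finrank] at this
    obtain ⟨σ, hσ⟩ := exists_place D.good D.hn D.hy hqy hq13
    have hb : ∃ b, Red (σ w) b := ⟨_, redHom σ (z : (𝓞 K)ˣ), rfl, rfl⟩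
    obtain ⟨b, hb⟩ := hb
    have huniq : ∀ {x : ℚ_[q]} {a a' : ZMod q}, Red x a → Red x a' → a = a' := by
      rintro x a a' ⟨v, hv, rfl⟩ ⟨v', hv', rfl⟩
      congr 1
      exact Subtype.ext (hv.trans hv'.symm)
    have hbp : b ^ p = 1 := by
      have h1 := hb.pow p
      rw [← map_pow, hprim.pow_eq_one, map_one] at h1
      exact huniq h1 Red.one
    have hb1 : b = 1 := by
      have hb0 : b ≠ 0 := by
        rintro rfl
        rw [zero_pow D.hp.ne_zero] at hbp
        exact zero_ne_one hbp
      have h1 : b ^ (q - 1) = 1 := ZMod.pow_card_sub_one_eq_one hb0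
      have hcop : Nat.Coprime p (q - 1) := by
        rw [Nat.Prime.coprime_iff_not_dvd D.hp]
        intro h
        rw [← ZMod.natCast_eq_zero_iff, Nat.cast_sub hq.one_le, sub_eq_zero, Nat.cast_one] at h
        exact hqp h
      have h2 : orderOf b ∣ Nat.gcd p (q - 1) :=
        Nat.dvd_gcd (orderOf_dvd_of_pow_eq_one hbp) (orderOf_dvd_of_pow_eq_one h1)
      rw [hcop.gcd_eq_one, Nat.dvd_one, orderOf_eq_one_iff] at h2
      exact h2
    have hsum : ∑ i ∈ Finset.range p, w ^ i = 0 := hprim.geom_sum_eq_zero D.hp.one_lt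
    have hs2 : Red (σ (∑ i ∈ Finset.range p, w ^ i)) (∑ i ∈ Finset.range p, b ^ i) := by
      rw [map_sum]
      have : ∀ s : Finset ℕ, Red (∑ i ∈ s, σ (w ^ i)) (∑ i ∈ s, b ^ i) := by
        intro s
        induction s using Finset.induction_on with
        | empty => simpa using Red.nat (q := q) 0
        | insert i s hi ih =>
          rw [Finset.sum_insert hi, Finset.sum_insert hi, map_pow]
          exact (hb.pow i).add ih
      exact this _
    rw [hsum, map_zero] at hs2
    have h0 : Red (0 : ℚ_[q]) 0 := by simpa using Red.nat (q := q) 0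
    have h3 := huniq hs2 h0
    rw [hb1] at h3
    simp only [one_pow, Finset.sum_const, Finset.card_range, nsmul_eq_mul, mul_one] at h3
    rw [ZMod.natCast_eq_zero_iff] at h3
    have := Nat.le_of_dvd D.hp.pos h3
    omega
  have hcop : (Nat.card (Units.torsion K)).Coprime p :=
    ((Nat.Prime.coprime_iff_not_dvd D.hp).mpr hnd).symm
  obtain ⟨ξ, hξ⟩ := (powCoprime hcop).surjective ⟨ζ, hζ⟩
  refine ⟨ξ, ?_⟩
  have := congrArg Subtype.val hξ
  exact this.symm

end ideals


open Polynomial NumberField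

section classgroup

variable {K : Type*} [Field K] [NumberField K]

lemma unit_part {pb : PowerBasis ℚ K} {k : ℤ} {n y p : ℕ} (D : Data pb k n y p) (hk : 0 < k)
    {q : ℕ} (hq : q.Prime) (hqy : q ∣ y) (hq13 : 13 < q) (hqp : (q : ZMod p) ≠ 1)
    (c : DihedralGroup 6 → ℕ) (hc1 : c 1 = 0) (a : K) (ha : a ≠ 0) (ε : (𝓞 K)ˣ)
    (h : a ^ p * ((ε : 𝓞 K) : K) = ∏ d, (mo pb.gen d + 2) ^ (c d)) : ∀ d, p ∣ c d := by
  have hp := D.hp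
  have hfs : ∃ f : Fin 5 → (𝓞 K)ˣ, ∀ x : (𝓞 K)ˣ, ∃ ζ : (𝓞 K)ˣ, ∃ e : Fin 5 → ℤ,
      x = ζ ^ p * ∏ i, f i ^ e i := by
    rw [← unit_rank D.good hk]
    refine ⟨Units.fundSystem K, fun x => ?_⟩
    obtain ⟨⟨ζ, e⟩, hx, -⟩ := Units.exist_unique_eq_mul_prod K x
    obtain ⟨ξ, hξ⟩ := torsion_pow D hq hqy hq13 hqp ζ ζ.2
    exact ⟨ξ, e, by rw [← hξ]; exact hx⟩
  obtain ⟨f, hf⟩ := hfs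
  obtain ⟨ρ, hρ, -⟩ := D.good.galois
  have hroot : ∀ d, aeval (mo pb.gen d) (gpoly k) = 0 := by
    intro d
    rw [← hρ]
    have := Polynomial.aeval_algHom_apply ((ρ d : K ≃ₐ[ℚ] K) : K →+* K).toIntAlgHom pb.gen (gpoly k)
    rw [D.good.root, map_zero] at this
    exact this
  choose U hU using fun d => exists_unit (U_eq (hroot d))
  let u : Fin 6 → (𝓞 K)ˣ := Fin.cons ε (fun i : Fin 5 => U (.r (i.succ : Fin 6)))
  obtain ⟨e, ⟨i0, hi0⟩, η, hη⟩ := unit_dep hp f hf u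
  let E : DihedralGroup 6 → ℤ := fun d => match d with
    | .r i => (Fin.cons 0 (fun i : Fin 5 => e i.succ) : Fin 6 → ℤ) i
    | .sr _ => 0
  have hprod : ∏ d, uu (mo pb.gen d) ^ (E d) = ∏ i : Fin 5, ((U (.r (i.succ : Fin 6)) : 𝓞 K) : K) ^ e i.succ := by
    rw [prod_dihedral]
    have h2 : ∏ i : Fin 6, uu (mo pb.gen (.sr i)) ^ (E (.sr i)) = 1 :=
      Finset.prod_eq_one fun i _ => zpow_zero _
    rw [h2, mul_one, Fin.prod_univ_succ]
    have h3 : uu (mo pb.gen (.r (0 : Fin 6))) ^ (E (.r (0 : Fin 6))) = 1 := zpow_zero _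
    rw [h3, one_mul]
    refine Finset.prod_congr rfl fun i _ => ?_
    rw [hU]; rfl
  have hηK : ((ε : 𝓞 K) : K) ^ (e 0) * ∏ d, uu (mo pb.gen d) ^ (E d) = ((η : 𝓞 K) : K) ^ p := by
    rw [hprod]
    have h1 := congrArg (fun w : (𝓞 K)ˣ => ((w : 𝓞 K) : K)) hη
    rw [Fin.prod_univ_succ] at h1
    let ψ : (𝓞 K)ˣ →* Kˣ := Units.map (algebraMap (𝓞 K) K : 𝓞 K →* K)
    have hψ : ∀ w : (𝓞 K)ˣ, ((w : 𝓞 K) : K) = ((ψ w : Kˣ) : K) := fun _ => rfl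
    have h2 := congrArg ψ hη
    rw [Fin.prod_univ_succ, map_mul, map_prod, map_zpow, map_pow] at h2
    have h3 := congrArg (Units.val) h2
    simp only [map_zpow, Units.val_mul, Units.val_zpow_eq_zpow_val, Units.val_pow_eq_pow_val,
      Units.coe_prod] at h3
    exact h3
  have hε0 : ((ε : 𝓞 K) : K) ≠ 0 := by
    intro h0
    exact ε.ne_zero (RingOfIntegers.coe_eq_zero_iff.mp h0)
  have hEs : ∀ i, E (.sr i) = 0 := fun _ => rfl
  have hE0 : E (.r 0) = 0 := rfl
  by_cases hdiv : (p : ℤ) ∣ e 0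
  · exfalso
    obtain ⟨f', hf'⟩ := hdiv
    have key := D.indep (fun _ => 0) E (((η : 𝓞 K) : K) * ((ε : 𝓞 K) : K) ^ (-f')) (by
      rw [mul_pow, ← hηK, ← zpow_natCast (((ε : 𝓞 K) : K) ^ (-f')), ← zpow_mul, hf', mul_right_comm,
        ← zpow_add₀ hε0]
      simp only [zpow_zero, Finset.prod_const_one]
      congr 1
      rw [show (p : ℤ) * f' + -f' * p = 0 by ring, zpow_zero]) hEs hE0
    refine Fin.cases ?_ (fun i => ?_) i0 hi0
    · exact fun hh => hh ⟨f', hf'⟩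
    · exact fun hh => hh (key.2 (.r (i.succ : Fin 6)))
  · have key := D.indep (fun d => e 0 * c d) E (((η : 𝓞 K) : K) * a ^ (e 0)) (by
      have h4 : ∏ d, (mo pb.gen d + 2) ^ (e 0 * (c d : ℤ)) = (a ^ p * ((ε : 𝓞 K) : K)) ^ (e 0) := by
        rw [h, ← Finset.prod_zpow]
        refine Finset.prod_congr rfl fun d _ => ?_
        rw [← zpow_natCast, ← zpow_mul, mul_comm]
      rw [h4, mul_pow, ← hηK, mul_zpow, ← zpow_natCast, ← zpow_natCast a p, ← zpow_mul, ← zpow_mul,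
        mul_comm (p : ℤ)]
      ring) hEs hE0
    intro d
    have h5 := key.1 d
    simp only [hc1, Nat.cast_zero, mul_zero, sub_zero] at h5
    have h6 := (Nat.prime_iff_prime_int.mp hp).dvd_or_dvd h5
    exact_mod_cast h6.resolve_left hdiv

lemma class_rank {pb : PowerBasis ℚ K} {k : ℤ} {n y : ℕ} (good : IsGoodGen pb k) (hk : 0 < k)
    (hn : 1 < n) (hn6 : n.Coprime 6) (hy : (y : ℤ) ^ n = 7 ^ 6 + 388800 * k)
    (h30 : Nat.Coprime y 30030) (hdet : ∀ p ∈ n.primeFactors, Detects {q | q.Prime ∧ q ∣ y} p)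
    {q : ℕ} (hq : q.Prime) (hqy : q ∣ y) (hq13 : 13 < q)
    (hqp : ∀ p ∈ n.primeFactors, (q : ZMod p) ≠ 1) :
    HasZModRankGE (ClassGroup (𝓞 K)) n 11 := by
  classical
  have hn0 : n ≠ 0 := by omega
  obtain ⟨ρ, hρ, -⟩ := good.galois
  have hroot : ∀ d, aeval (mo pb.gen d) (gpoly k) = 0 := by
    intro d
    rw [← hρ]
    have := Polynomial.aeval_algHom_apply ((ρ d : K ≃ₐ[ℚ] K) : K →+* K).toIntAlgHom pb.gen (gpoly k)
    rw [good.root, map_zero] at this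
    exact this
  have hIntg : ∀ d, IsIntegral ℤ (mo pb.gen d) := fun d =>
    ⟨gpoly k, gpoly_monic k, by rw [← aeval_def]; exact hroot d⟩
  let T : DihedralGroup 6 → 𝓞 K := fun d => ⟨mo pb.gen d, hIntg d⟩
  have hTc : ∀ d, ((T d : 𝓞 K) : K) = mo pb.gen d := fun _ => rfl
  have hT : ∀ d, aeval (T d) (gpoly k) = 0 := by
    intro d
    apply RingOfIntegers.coe_injective
    have := aeval_algebraMap_apply (R := ℤ) K (T d) (gpoly k)
    rw [map_zero, ← this]; exact hroot d
  have hx0 : ∀ d, T d + 2 ≠ 0 := by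
    intro d h0
    have h1 := prod_X good.root
    have h2 : mo pb.gen d + 2 = 0 := by
      have := congrArg (algebraMap (𝓞 K) K) h0
      rw [map_add, map_zero, map_ofNat] at this
      exact this
    rw [Finset.prod_eq_zero (Finset.mem_univ d) h2] at h1
    have h3 : ((7 ^ 6 + 388800 * k : ℤ) : K) = 0 := by have h4 := h1.symm; push_cast; linear_combination h4
    rw [Int.cast_eq_zero] at h3
    omega
  choose I hI using fun d => ideal_pow (hT d) hy h30
  have hI0 : ∀ d, I d ≠ 0 := by
    intro d h0
    have := hI d
    rw [h0, zero_pow hn0, Ideal.zero_eq_bot, Ideal.span_singleton_eq_bot] at this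
    exact hx0 d this
  obtain ⟨j, hjinj, hj1⟩ : ∃ j : Fin 11 → DihedralGroup 6, Function.Injective j ∧ ∀ i, j i ≠ 1 := by
    have hcard : Fintype.card {d : DihedralGroup 6 // d ≠ 1} = 11 := by
      rw [Fintype.card_subtype_compl, DihedralGroup.card]; simp
    let e := (Fintype.equivFinOfCardEq hcard).symm
    exact ⟨fun i => (e i : DihedralGroup 6), Subtype.val_injective.comp e.injective, fun i => (e i).2⟩
  let J : DihedralGroup 6 → nonZeroDivisors (Ideal (𝓞 K)) :=
    fun d => ⟨I d, mem_nonZeroDivisors_of_ne_zero (hI0 d)⟩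
  refine rank_crit (by omega) (fun i => ClassGroup.mk0 (J (j i))) ?_ ?_
  · intro i
    rw [← map_pow, ClassGroup.mk0_eq_one_iff]
    have : ((J (j i) ^ n : nonZeroDivisors (Ideal (𝓞 K))) : Ideal (𝓞 K)) = Ideal.span {T (j i) + 2} := by
      rw [SubmonoidClass.coe_pow]; exact (hI _).symm
    rw [this]
    exact ⟨⟨_, rfl⟩⟩
  · intro p hp hpn c hc
    have hpf : p ∈ n.primeFactors := Nat.mem_primeFactors.mpr ⟨hp, hpn, hn0⟩
    have hp5 : 5 ≤ p := by
      have h6 : p.Coprime 6 := Nat.Coprime.coprime_dvd_left hpn hn6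
      have h2 := hp.two_le
      by_contra hlt
      push Not at hlt
      interval_cases p
      · norm_num at h6
      · norm_num at h6
      · norm_num at hp
    have D : Data pb k n y p := ⟨good, hn0, hy, hp, hp5, hpn, hdet p hpf⟩
    obtain ⟨m, hm⟩ := hpn
    have hnp : n / p = m := by rw [hm]; exact Nat.mul_div_cancel_left _ hp.pos
    let c' : DihedralGroup 6 → ℕ := fun d => ∑ i, if j i = d then c i else 0
    have hc'j : ∀ i, c' (j i) = c i := by
      intro i
      simp only [c']
      rw [Finset.sum_eq_single i]
      · simp
      · intro b _ hb
        rw [if_neg (fun h => hb (hjinj h))]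
      · simp
    have hc'1 : c' 1 = 0 := Finset.sum_eq_zero fun i _ => if_neg (hj1 i)
    have hprodc : ∏ i, (T (j i) + 2) ^ c i = ∏ d, (T d + 2) ^ c' d := by
      simp only [c', ← Finset.prod_pow_eq_pow_sum]
      rw [Finset.prod_comm]
      refine Finset.prod_congr rfl fun i _ => ?_
      rw [Finset.prod_eq_single (j i)]
      · simp
      · intro b _ hb
        rw [if_neg (fun h => hb h.symm), pow_zero]
      · simp
    have hc2 : ClassGroup.mk0 (∏ i, J (j i) ^ (n / p * c i)) = 1 := by
      rw [map_prod]; simpa only [map_pow] using hc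
    rw [ClassGroup.mk0_eq_one_iff] at hc2
    obtain ⟨⟨a, ha⟩⟩ := hc2
    have hIa : ∏ i, I (j i) ^ (n / p * c i) = Ideal.span {a} := by
      rw [← Ideal.submodule_span_eq, ← ha]; simp [J]
    have hspan : Ideal.span {a ^ p} = Ideal.span {∏ d, (T d + 2) ^ c' d} := by
      rw [← Ideal.span_singleton_pow, ← hIa, ← hprodc, ← Finset.prod_pow, ← Ideal.prod_span_singleton]
      refine Finset.prod_congr rfl fun i _ => ?_
      rw [← Ideal.span_singleton_pow, hI, ← pow_mul, ← pow_mul, hnp, hm]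
      congr 1; ring
    rw [Ideal.span_singleton_eq_span_singleton] at hspan
    obtain ⟨ε, hε⟩ := hspan
    have hεK := congrArg (algebraMap (𝓞 K) K) hε
    rw [map_mul, map_pow, map_prod] at hεK
    simp only [map_pow, map_add, map_ofNat] at hεK
    have ha0 : (algebraMap (𝓞 K) K) a ≠ 0 := by
      intro h0
      have h1 : a = 0 := RingOfIntegers.coe_eq_zero_iff.mp h0
      rw [h1, zero_pow hp.ne_zero, zero_mul] at hε
      exact Finset.prod_ne_zero_iff.mpr (fun d _ => pow_ne_zero (c' d) (hx0 d)) hε.symm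
    have key := unit_part D hk hq hqy hq13 (hqp p hpf) c' hc'1 _ ha0 ε hεK
    intro i
    rw [← hc'j i]
    exact key _

end classgroup


lemma not_same_field {K : Type*} [Field K] [NumberField K] [IsGalois ℚ K] {T : Set ℕ} (hT : T.Infinite)
    (kf : ℕ → ℕ) (h : ∀ Q ∈ T, Q.Prime ∧ 13 < Q ∧ 0 < kf Q ∧ Q ∣ kf Q ∧ ¬ Q ^ 2 ∣ kf Q ∧
      ∃ s : K, s ^ 2 = -27 * (kf Q : K)) : False := by
  classical
  choose! hp h13 h0 hd hd2 s hs using h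
  have : ∃ c : (K ≃ₐ[ℚ] K) → Prop, (T ∩ {Q | (fun σ : K ≃ₐ[ℚ] K => σ (s Q) = s Q) = c}).Infinite := by
    by_contra hc
    push Not at hc
    apply hT
    have h1 : T ⊆ ⋃ c : (K ≃ₐ[ℚ] K) → Prop,
        (T ∩ {Q | (fun σ : K ≃ₐ[ℚ] K => σ (s Q) = s Q) = c}) := by
      intro Q hQ
      rw [Set.mem_iUnion]
      exact ⟨_, hQ, rfl⟩
    refine (Set.finite_iUnion fun c => ?_).subset h1
    have := hc c
    exact this
  obtain ⟨c, hc⟩ := this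
  obtain ⟨Q, hQT, hQc⟩ := hc.nonempty
  obtain ⟨Q', ⟨hQT', hQc'⟩, hlt⟩ := hc.exists_gt (kf Q)
  have hsame : ∀ σ : K ≃ₐ[ℚ] K, σ (s Q) = s Q ↔ σ (s Q') = s Q' := by
    intro σ
    have := congrFun (hQc.trans hQc'.symm) σ
    exact iff_of_eq this
  have hpm : ∀ R ∈ T, ∀ σ : K ≃ₐ[ℚ] K, σ (s R) = s R ∨ σ (s R) = - s R := by
    intro R hR σ
    rw [← sq_eq_sq_iff_eq_or_eq_neg, ← map_pow, hs R hR, map_mul, map_neg, map_ofNat, map_natCast]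
  have hfix : ∀ σ : K ≃ₐ[ℚ] K, σ (s Q * s Q') = s Q * s Q' := by
    intro σ
    rw [map_mul]
    by_cases h1 : σ (s Q) = s Q
    · rw [h1, (hsame σ).1 h1]
    · have h2 : σ (s Q') ≠ s Q' := fun h => h1 ((hsame σ).2 h)
      rw [(hpm Q hQT σ).resolve_left h1, (hpm Q' hQT' σ).resolve_left h2]
      ring
  have hbot := (IsGalois.mem_bot_iff_fixed (F := ℚ) (s Q * s Q')).2 hfix
  rw [IntermediateField.mem_bot] at hbot
  obtain ⟨r, hr⟩ := hbot
  have hr2 : r ^ 2 = ((27 ^ 2 * kf Q * kf Q' : ℕ) : ℚ) := by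
    apply (algebraMap ℚ K).injective
    rw [map_pow, hr, mul_pow, hs Q hQT, hs Q' hQT', map_natCast]
    push_cast
    ring
  have hsq : IsSquare ((27 ^ 2 * kf Q * kf Q' : ℕ) : ℚ) := ⟨r, by rw [← hr2, sq]⟩
  rw [Rat.isSquare_natCast_iff] at hsq
  obtain ⟨m, hm⟩ := hsq
  have hP := hp Q' hQT'
  have hnd : ¬ Q' ∣ kf Q := fun h => absurd (Nat.le_of_dvd (h0 Q hQT) h) (by omega)
  have hQ'm : Q' ∣ m := by
    have : Q' ∣ m * m := hm ▸ (hd Q' hQT').mul_left _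
    rcases hP.dvd_mul.1 this with h | h <;> exact h
  have h3 : ¬ Q' ∣ 27 ^ 2 := by
    intro h
    have h4 := hP.dvd_of_dvd_pow h
    have h5 : Q' ∣ 3 := hP.dvd_of_dvd_pow (n := 3) (by simpa using h4)
    have h6 := Nat.le_of_dvd (by norm_num) h5
    have h7 := h13 Q' hQT'
    omega
  have hc1 : Nat.Coprime (Q' ^ 2) (27 ^ 2 * kf Q) := by
    apply Nat.Coprime.pow_left
    rw [hP.coprime_iff_not_dvd, hP.dvd_mul]
    tauto
  apply hd2 Q' hQT'
  apply hc1.dvd_of_dvd_mul_left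
  rw [hm, sq]
  exact mul_dvd_mul hQ'm hQ'm

lemma equal_of_iso (K K' : IntermediateField ℚ ℂ) (hK : Normal ℚ K) (e : K ≃+* K') : K = K' := by
  have hK2 : @Normal ℚ K _ _ K.algebra' := hK
  let f : @AlgHom ℚ K ℂ _ _ _ K.algebra' _ :=
    { (K'.val : K' →+* ℂ).comp (e : K →+* K') with
      commutes' := fun r => by
        have := map_ratCast ((K'.val : K' →+* ℂ).comp (e : K →+* K')) r
        simp }
  have hf : ∀ z, f z = e z := fun z => rfl
  have h1 : f.fieldRange = K := AlgHom.fieldRange_of_normal f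
  rw [← h1]
  ext x
  rw [AlgHom.mem_fieldRange]
  constructor
  · rintro ⟨z, rfl⟩
    rw [hf]
    exact (e z).2
  · intro hx
    exact ⟨e.symm ⟨x, hx⟩, by rw [hf]; simp⟩

/-- everything about the field cut out by one parameter -/
lemma one_field {n : ℕ} (hn : 1 < n) (hn6 : n.Coprime 6) {y k : ℕ} (hy : y ^ n = 7 ^ 6 + 388800 * k)
    (hk : k % 4 = 2) (h30 : Nat.Coprime y 30030)
    (hdet : ∀ p ∈ n.primeFactors, Detects {q | q.Prime ∧ q ∣ y} p)
    {q : ℕ} (hq : q.Prime) (hqy : q ∣ y) (hq13 : 13 < q) (hqp : ∀ p ∈ n.primeFactors, (q : ZMod p) ≠ 1) :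
    ∃ K : IntermediateField ℚ ℂ,
      (let P : Polynomial ℚ :=
          (X + 2) * (2 * X + 1) * (X - 3) * (3 * X - 1) * (X + 4) * (4 * X + 1) *
            (X - 5) * (5 * X - 1) * (2 * X - 3) * (3 * X - 2) * (4 * X - 5) * (5 * X - 4) +
          C ((y : ℚ) ^ n) *
            (X ^ 2 * (X - 1) ^ 2 * (X + 1) ^ 2 * (X - 2) ^ 2 * (2 * X - 1) ^ 2)
       Irreducible P ∧ P.IsSplittingField ℚ K) ∧
        NumberField K ∧ Module.finrank ℚ K = 12 ∧ IsGalois ℚ K ∧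
        Nonempty ((K ≃ₐ[ℚ] K) ≃* DihedralGroup 6) ∧
        TotallyImaginary K ∧
        HasZModRankGE (ClassGroup (𝓞 K)) n 11 ∧ ∃ s : K, s ^ 2 = -27 * (k : K) := by
  have hirr : Irreducible ((gpoly k).map (Int.castRingHom ℚ)) := gpoly_irreducible (k := (k : ℤ)) (by omega)
  have hmon : ((gpoly k).map (Int.castRingHom ℚ)).Monic := (gpoly_monic k).map _
  have hk0 : (0 : ℤ) < k := by omega
  obtain ⟨θ, hθ⟩ := IsAlgClosed.exists_aeval_eq_zero ℂ ((gpoly k).map (Int.castRingHom ℚ))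
    (degree_pos_of_irreducible hirr).ne'
  have hθint : IsIntegral ℚ θ := ⟨_, hmon, hθ⟩
  have hmin : minpoly ℚ θ = (gpoly k).map (Int.castRingHom ℚ) :=
    (minpoly.eq_of_irreducible_of_monic hirr hθ hmon).symm
  let K : IntermediateField ℚ ℂ := IntermediateField.adjoin ℚ {θ}
  let pb : PowerBasis ℚ K := IntermediateField.adjoin.powerBasis hθint
  have : FiniteDimensional ℚ K := pb.finite
  have : NumberField K := ⟨⟩
  have good : IsGoodGen pb k := by
    have h1 : minpoly ℚ pb.gen = minpoly ℚ θ := IntermediateField.minpoly_gen ℚ θ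
    rw [IsGoodGen, h1, hmin]
  obtain ⟨ρ, -, hgal⟩ := good.galois
  have hsplit : ((gpoly k).map (Int.castRingHom ℚ)).IsSplittingField ℚ K := by
    constructor
    · rw [← good]
      exact hgal.to_normal.splits pb.gen
    · rw [eq_top_iff, ← pb.adjoin_gen_eq_top]
      apply Algebra.adjoin_mono
      rw [Set.singleton_subset_iff, mem_rootSet]
      refine ⟨hirr.ne_zero, ?_⟩
      rw [← good]
      exact minpoly.aeval _ _
  refine ⟨K, ⟨?_, ?_⟩, ‹_›, good.finrank, hgal, ⟨ρ.symm⟩, ?_, ?_, ?_⟩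
  · rw [P_eq n y k hy]
    have hu : IsUnit (C (14400 : ℚ)) := isUnit_C.2 (by norm_num)
    exact (irreducible_isUnit_mul hu).2 hirr
  · rw [P_eq n y k hy]
    constructor
    · rw [Polynomial.map_mul, map_C]
      exact (Splits.C _).mul hsplit.1
    · have := hsplit.2
      rw [rootSet, aroots_C_mul _ (by norm_num : (14400 : ℚ) ≠ 0)]
      exact this
  · exact fun φ => ⟨pb.gen, totally_complex good hk0 φ⟩
  · exact class_rank good hk0 hn hn6 (by exact_mod_cast hy) h30 hdet hq hqy hq13 hqp
  · have h1 := good.root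
    rw [aeval_gpoly] at h1
    set t := pb.gen
    have hb : t * (t - 1) * (t + 1) * (t - 2) * (2 * t - 1) ≠ 0 := by
      obtain ⟨g1, g2, g3, g4, g5⟩ := gen_of_root good.root
      exact mul_ne_zero (mul_ne_zero (mul_ne_zero (mul_ne_zero g1 g2) g3) g4) g5
    refine ⟨(t ^ 2 - t + 1) ^ 3 / (t * (t - 1) * (t + 1) * (t - 2) * (2 * t - 1)), ?_⟩
    rw [div_pow, div_eq_iff (pow_ne_zero 2 hb)]
    push_cast at h1
    linear_combination h1

/-- **`D₆`-fields with large class group.**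
For every integer `n > 1` coprime to `6` there are infinitely many pairwise non-isomorphic
totally imaginary Galois number fields `K` of degree `12` with Galois group the dihedral
group `D₆` of order `12`, each a splitting field of the irreducible degree-12 polynomial
`(x+2)(2x+1)(x-3)(3x-1)(x+4)(4x+1)(x-5)(5x-1)(2x-3)(3x-2)(4x-5)(5x-4)
  + yⁿ·x²(x-1)²(x+1)²(x-2)²(2x-1)²`
with `y` a positive integer, `yⁿ ≡ 117649 (mod 388800)` and `y` coprime to `7`, `11`
and `13`, such that `rank_n Cl(K) ≥ 11`. -/
theorem D6_large_class_group (n : ℕ) (hn : 1 < n) (hn6 : Nat.Coprime n 6) :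
    ∃ S : Set (IntermediateField ℚ ℂ), S.Infinite ∧
      (∀ K ∈ S, ∀ K' ∈ S, K ≠ K' → IsEmpty (K ≃+* K')) ∧
      ∀ K ∈ S, ∃ y : ℕ, 0 < y ∧ y ^ n % 388800 = 117649 ∧
        Nat.Coprime y 7 ∧ Nat.Coprime y 11 ∧ Nat.Coprime y 13 ∧
        (let P : Polynomial ℚ :=
          (X + 2) * (2 * X + 1) * (X - 3) * (3 * X - 1) * (X + 4) * (4 * X + 1) *
            (X - 5) * (5 * X - 1) * (2 * X - 3) * (3 * X - 2) * (4 * X - 5) * (5 * X - 4) +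
          C ((y : ℚ) ^ n) *
            (X ^ 2 * (X - 1) ^ 2 * (X + 1) ^ 2 * (X - 2) ^ 2 * (2 * X - 1) ^ 2)
         Irreducible P ∧ P.IsSplittingField ℚ K) ∧
        NumberField K ∧ Module.finrank ℚ K = 12 ∧ IsGalois ℚ K ∧
        Nonempty ((K ≃ₐ[ℚ] K) ≃* DihedralGroup 6) ∧
        TotallyImaginary K ∧
        HasZModRankGE (ClassGroup (𝓞 K)) n 11 := by
  have key : ∀ B : ℕ, ∃ Q : ℕ, B < Q ∧ Q.Prime ∧ n < Q ∧ 13 < Q ∧ (Q : ZMod n) = -1 := by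
    intro B
    have : NeZero n := ⟨by omega⟩
    obtain ⟨Q, hQ, hp, h1⟩ := Nat.forall_exists_prime_gt_and_eq_mod (q := n) (a := -1)
      isUnit_one.neg (B + n + 13)
    exact ⟨Q, by omega, hp, by omega, by omega, h1⟩
  let T : Set ℕ := {Q | Q.Prime ∧ n < Q ∧ 13 < Q ∧ (Q : ZMod n) = -1}
  have hT : T.Infinite := by
    rw [Set.infinite_iff_exists_gt]
    intro B
    obtain ⟨Q, h1, h2⟩ := key B
    exact ⟨Q, h2, h1⟩
  have hex : ∀ Q ∈ T, ∃ y k : ℕ, ∃ K : IntermediateField ℚ ℂ, Q.Prime ∧ 13 < Q ∧ 0 < k ∧ Q ∣ k ∧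
      ¬ Q ^ 2 ∣ k ∧ 0 < y ∧ y ^ n % 388800 = 117649 ∧
        Nat.Coprime y 7 ∧ Nat.Coprime y 11 ∧ Nat.Coprime y 13 ∧
        (let P : Polynomial ℚ :=
          (X + 2) * (2 * X + 1) * (X - 3) * (3 * X - 1) * (X + 4) * (4 * X + 1) *
            (X - 5) * (5 * X - 1) * (2 * X - 3) * (3 * X - 2) * (4 * X - 5) * (5 * X - 4) +
          C ((y : ℚ) ^ n) *
            (X ^ 2 * (X - 1) ^ 2 * (X + 1) ^ 2 * (X - 2) ^ 2 * (2 * X - 1) ^ 2)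
         Irreducible P ∧ P.IsSplittingField ℚ K) ∧
        NumberField K ∧ Module.finrank ℚ K = 12 ∧ IsGalois ℚ K ∧
        Nonempty ((K ≃ₐ[ℚ] K) ≃* DihedralGroup 6) ∧
        TotallyImaginary K ∧
        HasZModRankGE (ClassGroup (𝓞 K)) n 11 ∧ ∃ s : K, s ^ 2 = -27 * (k : K) := by
    rintro Q ⟨hQ, hQn, hQ13, hQ1⟩
    obtain ⟨y, k, hy0, hy, hk, hQk, hQk2, h30, hdet, q0, hq0, hqy, hq13, hqp⟩ :=
      exists_y hn hn6 hQ hQn hQ13 hQ1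
    obtain ⟨K, hK⟩ := one_field hn hn6 hy hk h30 hdet hq0 hqy hq13 hqp
    exact ⟨y, k, K, hQ, hQ13, by omega, hQk, hQk2, hy0, by omega,
      h30.coprime_dvd_right (by norm_num), h30.coprime_dvd_right (by norm_num),
      h30.coprime_dvd_right (by norm_num), hK⟩
  choose! yf kf Kf hKf using hex
  refine ⟨Kf '' T, ?_, ?_, ?_⟩
  · intro hfin
    have : ∃ K : IntermediateField ℚ ℂ, (T ∩ {Q | Kf Q = K}).Infinite := by
      by_contra hc
      push Not at hc
      apply hT
      have h1 : T ⊆ ⋃ K ∈ Kf '' T, (T ∩ {Q | Kf Q = K}) := by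
        intro Q hQ
        rw [Set.mem_iUnion₂]
        exact ⟨Kf Q, ⟨Q, hQ, rfl⟩, hQ, rfl⟩
      exact (hfin.biUnion fun K _ => hc K).subset h1
    obtain ⟨K, hK⟩ := this
    obtain ⟨Q, hQT, rfl⟩ := hK.nonempty
    obtain ⟨-, -, -, -, -, -, -, -, -, -, -, hnf, -, hgal, -⟩ := hKf Q hQT
    refine not_same_field (K := Kf Q) hK kf ?_
    rintro R ⟨hR, hRK⟩
    obtain ⟨h1, h2, h3, h4, h5, -, -, -, -, -, -, -, -, -, -, -, -, hs⟩ := hKf R hR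
    refine ⟨h1, h2, h3, h4, h5, ?_⟩
    have hRK2 : Kf R = Kf Q := hRK
    rw [← hRK2]
    exact hs
  · rintro K ⟨Q, hQ, rfl⟩ K' - hne
    obtain ⟨-, -, -, -, -, -, -, -, -, -, -, hnf, -, hgal, -⟩ := hKf Q hQ
    exact ⟨fun e => hne (equal_of_iso _ _ hgal.to_normal e)⟩
  · rintro K ⟨Q, hQ, rfl⟩
    obtain ⟨-, -, -, -, -, h1, h2, h3, h4, h5, h6, h7, h8, h9, h10, h11, h12, -⟩ := hKf Q hQ
    exact ⟨yf Q, h1, h2, h3, h4, h5, h6, h7, h8, h9, h10, h11, h12⟩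
end

section
/- For every real number t > 100 and every real number x, one has (x−2)(2x−1)(x+3)(3x+1)(2x+3)(3x+2) + t·x²(x+1)² > 0. In particular, for any integers y, n with yⁿ > 100, the polynomial x⁶ + 3x⁵ + ((yⁿ−127)/36)x⁴ + ((yⁿ−217)/18)x³ + ((yⁿ−127)/36)x² + 3x + 1 = (1/36)·((x−2)(2x−1)(x+3)(3x+1)(2x+3)(3x+2) + yⁿ·x²(x+1)²) has no real root. -/
/-- **Positivity in the `S₃` case.**
For every real `t > 100` and every real `x`,
`(x-2)(2x-1)(x+3)(3x+1)(2x+3)(3x+2) + t·x²(x+1)² > 0`.  In particular, for integers `y, n`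
with `yⁿ > 100`, the polynomial
`x⁶ + 3x⁵ + ((yⁿ-127)/36)x⁴ + ((yⁿ-217)/18)x³ + ((yⁿ-127)/36)x² + 3x + 1`, which equals
`(1/36)((x-2)(2x-1)(x+3)(3x+1)(2x+3)(3x+2) + yⁿ·x²(x+1)²)`, has no real root. -/
theorem S3_polynomial_positivity :
    (∀ t x : ℝ, 100 < t →
      0 < (x - 2) * (2 * x - 1) * (x + 3) * (3 * x + 1) * (2 * x + 3) * (3 * x + 2) +
        t * x ^ 2 * (x + 1) ^ 2) ∧
    ∀ (y : ℤ) (n : ℕ), 100 < y ^ n → ∀ x : ℝ,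
      (x ^ 6 + 3 * x ^ 5 + (((y : ℝ) ^ n - 127) / 36) * x ^ 4 +
          (((y : ℝ) ^ n - 217) / 18) * x ^ 3 + (((y : ℝ) ^ n - 127) / 36) * x ^ 2 +
          3 * x + 1 =
        (1 / 36) * ((x - 2) * (2 * x - 1) * (x + 3) * (3 * x + 1) * (2 * x + 3) *
          (3 * x + 2) + (y : ℝ) ^ n * (x ^ 2 * (x + 1) ^ 2))) ∧
      x ^ 6 + 3 * x ^ 5 + (((y : ℝ) ^ n - 127) / 36) * x ^ 4 +
          (((y : ℝ) ^ n - 217) / 18) * x ^ 3 + (((y : ℝ) ^ n - 127) / 36) * x ^ 2 +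
          3 * x + 1 ≠ 0 := by
  have key : ∀ t x : ℝ, 100 < t →
      0 < (x - 2) * (2 * x - 1) * (x + 3) * (3 * x + 1) * (2 * x + 3) * (3 * x + 2) +
        t * x ^ 2 * (x + 1) ^ 2 := by
    intro t x ht
    have e : (x - 2) * (2 * x - 1) * (x + 3) * (3 * x + 1) * (2 * x + 3) * (3 * x + 2) +
        t * x ^ 2 * (x + 1) ^ 2 =
        9 * ((x ^ 2 + x - 2) * (2 * x + 1)) ^ 2 + (t - 100) * (x * (x + 1)) ^ 2 := by ring
    rw [e]
    have h100 : 0 < t - 100 := by linarith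
    by_cases h : x * (x + 1) = 0
    · have h2 : ((x ^ 2 + x - 2) * (2 * x + 1)) ^ 2 = 4 := by
        have e2 : ((x ^ 2 + x - 2) * (2 * x + 1)) ^ 2 =
            (x * (x + 1) - 2) ^ 2 * (4 * (x * (x + 1)) + 1) := by ring
        rw [e2, h]; norm_num
      rw [h2, h]; norm_num
    · positivity
  refine ⟨key, fun y n hy x => ?_⟩
  have hy' : (100 : ℝ) < (y : ℝ) ^ n := by exact_mod_cast hy
  have e : x ^ 6 + 3 * x ^ 5 + (((y : ℝ) ^ n - 127) / 36) * x ^ 4 +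
          (((y : ℝ) ^ n - 217) / 18) * x ^ 3 + (((y : ℝ) ^ n - 127) / 36) * x ^ 2 +
          3 * x + 1 =
        (1 / 36) * ((x - 2) * (2 * x - 1) * (x + 3) * (3 * x + 1) * (2 * x + 3) *
          (3 * x + 2) + (y : ℝ) ^ n * (x ^ 2 * (x + 1) ^ 2)) := by ring
  refine ⟨e, ?_⟩
  have hk := key _ x hy'
  rw [mul_assoc ((y : ℝ) ^ n)] at hk
  rw [e]
  positivity
end

section
/- For every real number t > 49 and every real number x, one has (x−2)(2x−1)(x+2)(2x+1)(x−3)(3x−1)(x+3)(3x+1) + t·x²(x−1)²(x+1)² > 0. In particular, for any integers y, n with yⁿ > 49, the polynomial x⁸ + ((yⁿ−481)/36)x⁶ − ((yⁿ−733)/18)x⁴ + ((yⁿ−481)/36)x² + 1 = (1/36)·((x−2)(2x−1)(x+2)(2x+1)(x−3)(3x−1)(x+3)(3x+1) + yⁿ·x²(x−1)²(x+1)²) has no real root. -/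
theorem D4_pos_aux (t x : ℝ) (ht : 49 < t) :
    0 < (x - 2) * (2 * x - 1) * (x + 2) * (2 * x + 1) * (x - 3) * (3 * x - 1) *
        (x + 3) * (3 * x + 1) + t * x ^ 2 * (x - 1) ^ 2 * (x + 1) ^ 2 := by
  have key : (x - 2) * (2 * x - 1) * (x + 2) * (2 * x + 1) * (x - 3) * (3 * x - 1) *
        (x + 3) * (3 * x + 1) + t * x ^ 2 * (x - 1) ^ 2 * (x + 1) ^ 2 =
      36 * (x ^ 4 - 6 * x ^ 2 + 1) ^ 2 + (t - 49) * (x * (x ^ 2 - 1)) ^ 2 := by ring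
  rw [key]
  have h49 : 0 < t - 49 := by linarith
  by_cases h : x * (x ^ 2 - 1) = 0
  · have hne : x ^ 4 - 6 * x ^ 2 + 1 ≠ 0 := by
      rcases mul_eq_zero.mp h with h0 | h1
      · rw [h0]; norm_num
      · have h2 : x ^ 2 = 1 := by linarith
        have h4 : x ^ 4 = 1 := by
          rw [show x ^ 4 = (x ^ 2) ^ 2 by ring, h2]; norm_num
        rw [h4, h2]; norm_num
    positivity
  · positivity

/-- **Positivity in the `D₄` case.**
For every real `t > 49` and every real `x`,
`(x-2)(2x-1)(x+2)(2x+1)(x-3)(3x-1)(x+3)(3x+1) + t·x²(x-1)²(x+1)² > 0`.  In particular,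
for integers `y, n` with `yⁿ > 49`, the polynomial
`x⁸ + ((yⁿ-481)/36)x⁶ - ((yⁿ-733)/18)x⁴ + ((yⁿ-481)/36)x² + 1`, which equals
`(1/36)((x-2)(2x-1)(x+2)(2x+1)(x-3)(3x-1)(x+3)(3x+1) + yⁿ·x²(x-1)²(x+1)²)`, has no real
root. -/
theorem D4_polynomial_positivity :
    (∀ t x : ℝ, 49 < t →
      0 < (x - 2) * (2 * x - 1) * (x + 2) * (2 * x + 1) * (x - 3) * (3 * x - 1) *
        (x + 3) * (3 * x + 1) + t * x ^ 2 * (x - 1) ^ 2 * (x + 1) ^ 2) ∧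
    ∀ (y : ℤ) (n : ℕ), 49 < y ^ n → ∀ x : ℝ,
      (x ^ 8 + (((y : ℝ) ^ n - 481) / 36) * x ^ 6 - (((y : ℝ) ^ n - 733) / 18) * x ^ 4 +
          (((y : ℝ) ^ n - 481) / 36) * x ^ 2 + 1 =
        (1 / 36) * ((x - 2) * (2 * x - 1) * (x + 2) * (2 * x + 1) * (x - 3) * (3 * x - 1) *
          (x + 3) * (3 * x + 1) + (y : ℝ) ^ n * (x ^ 2 * (x - 1) ^ 2 * (x + 1) ^ 2))) ∧
      x ^ 8 + (((y : ℝ) ^ n - 481) / 36) * x ^ 6 - (((y : ℝ) ^ n - 733) / 18) * x ^ 4 +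
          (((y : ℝ) ^ n - 481) / 36) * x ^ 2 + 1 ≠ 0 := by
  refine ⟨fun t x ht => D4_pos_aux t x ht, fun y n hy x => ?_⟩
  have ht : (49 : ℝ) < (y : ℝ) ^ n := by exact_mod_cast hy
  have hpos := D4_pos_aux _ x ht
  refine ⟨by ring, ne_of_gt ?_⟩
  linear_combination (1 / 36) * hpos
end
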